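/- Let (Y_j)_{j≥1} be a real-valued, centered, stationary process. For every p ∈ (1,2), every ε > 0 and every N ≥ 1, one has E[|Σ_{j=1}^N Y_j|^p] ≤ C_p · N · (∫_0^1 (α_Y^{-1}(u))^{(p−1)(1+ε)/ε} du)^{ε/(1+ε)} · (E[|Y₁|^{(1+ε)p}])^{1/(1+ε)}, where C_p = 5^p · p(5−2p)/((p−1)(2−p)). (Corollary 2.) -/

import Mathlib

open MeasureTheory ProbabilityTheory Filter Set Real
open scoped ENNReal NNReal Classical Topology

/-!
Up to constants, `|s| ^ p` is the integral of `x ^ (p - 3) * H x s` over the levels `x > 0`, where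
`H x` is the Huber function, whose derivative is the truncation to `[-x, x]`. It therefore suffices
to bound the expectation of `H x` at a partial sum for each fixed `x`. Truncating the variables at a
height `M` costs `x` times their excess over `M`. Adding one truncated variable `W` to a partial
sum `S` increases `H x` by at most a quadratic term in `W`, capped at level `x`, plus `W` times the
derivative of `H x` at `S`; the expectation of the latter is a covariance, up to a term coming from
the mean of `W`. Removing the last `q` variables from `S` one at a time, Rio's covariance inequality
bounds it by integrals of the quantile function `Q` over the intervals `(0, α k)`. Choosing `M` and
`q` at the point where `α⁻¹ * Q` crosses the level `x` balances all these terms against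
`∫ Q * min x (α⁻¹ * Q)`. Integrating over `x` gives `∫ (α⁻¹) ^ (p - 1) * Q ^ p`, and Hölder's
inequality separates the two factors.
-/

/-- The truncation of a real number `s` to the interval `[-x, x]`, meaningful for `0 ≤ x`. -/
noncomputable def clip (x s : ℝ) : ℝ := max (-x) (min x s)

/-- The Huber function at level `x`, the primitive of `clip x`: equal to `s ^ 2 / 2` on `[-x, x]`
and affine with slope `± x` outside. -/
noncomputable def huber (x s : ℝ) : ℝ := s * clip x s - clip x s ^ 2 / 2

section Huber

lemma continuous_clip : Continuous fun z : ℝ × ℝ ↦ clip z.1 z.2 := by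
  unfold clip
  fun_prop

lemma continuous_huber : Continuous fun z : ℝ × ℝ ↦ huber z.1 z.2 := by
  have := continuous_clip
  unfold huber
  fun_prop

lemma measurable_clip (x : ℝ) : Measurable (clip x) :=
  (continuous_clip.comp (Continuous.prodMk_right x)).measurable

lemma measurable_huber (x : ℝ) : Measurable (huber x) :=
  (continuous_huber.comp (Continuous.prodMk_right x)).measurable

lemma abs_clip_sub_clip_le (x s t : ℝ) : |clip x s - clip x t| ≤ |s - t| := by
  have h : |min x s - min x t| ≤ |s - t| := by simpa using abs_min_sub_min_le_max x s x t
  simpa only [clip, max_comm (-x)] using (abs_max_sub_max_le_abs _ _ (-x)).trans h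

variable {x : ℝ}

lemma abs_clip (hx : 0 ≤ x) (s : ℝ) : |clip x s| = min |s| x := by
  unfold clip
  grind

lemma abs_sub_clip (hx : 0 ≤ x) (s : ℝ) : |s - clip x s| = max (|s| - x) 0 := by
  unfold clip
  grind

lemma abs_clip_le (hx : 0 ≤ x) (s : ℝ) : |clip x s| ≤ x :=
  (abs_clip hx s).trans_le (min_le_right _ _)

/-- Equality holds at `c = clip x s`, so that `huber x` is a maximum of affine functions. -/
lemma mul_sub_sq_le_huber {s c : ℝ} (hc : |c| ≤ x) : s * c - c ^ 2 / 2 ≤ huber x s := by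
  have hdist : (s - clip x s) ^ 2 ≤ (s - c) ^ 2 := by
    rw [sq_le_sq, abs_sub_clip ((abs_nonneg c).trans hc)]
    exact max_le (by linarith [abs_sub_abs_le_abs_sub s c]) (abs_nonneg _)
  unfold huber
  linarith

lemma huber_nonneg (hx : 0 ≤ x) (s : ℝ) : 0 ≤ huber x s := by
  simpa using mul_sub_sq_le_huber (s := s) (c := 0) (by simpa using hx)

lemma huber_le (hx : 0 ≤ x) (s : ℝ) : huber x s ≤ x * |s| := by
  have h : s * clip x s ≤ |s| * x := (le_abs_self _).trans <|
    (abs_mul s _).trans_le (mul_le_mul_of_nonneg_left (abs_clip_le hx s) (abs_nonneg s))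
  unfold huber
  linarith [sq_nonneg (clip x s)]

lemma huber_le_huber_add_mul_clip (hx : 0 ≤ x) (s t : ℝ) :
    huber x t ≤ huber x s + (t - s) * clip x t := by
  have h := mul_sub_sq_le_huber (s := s) (abs_clip_le hx t)
  unfold huber at h ⊢
  linarith

lemma huber_le_huber_add_mul_abs (hx : 0 ≤ x) (s t : ℝ) :
    huber x t ≤ huber x s + x * |t - s| := by
  have h : (t - s) * clip x t ≤ |t - s| * x := (le_abs_self _).trans <|
    (abs_mul (t - s) _).trans_le
      (mul_le_mul_of_nonneg_left (abs_clip_le hx t) (abs_nonneg _))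
  linarith [huber_le_huber_add_mul_clip hx s t]

lemma huber_add_le (hx : 0 ≤ x) (a b : ℝ) :
    huber x (a + b) ≤ huber x a + b * clip x a + 2 * (|b| * min x |b|) := by
  have hlip : |clip x (a + b) - clip x a| ≤ 2 * min x |b| := by
    rw [mul_min_of_nonneg _ _ zero_le_two, le_min_iff]
    constructor
    · linarith [abs_sub (clip x (a + b)) (clip x a), abs_clip_le hx a, abs_clip_le hx (a + b)]
    · have h := abs_clip_sub_clip_le x (a + b) a
      rw [add_sub_cancel_left] at h
      linarith [abs_nonneg b]
  have hmul : b * (clip x (a + b) - clip x a) ≤ |b| * (2 * min x |b|) :=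
    (le_abs_self _).trans <| (abs_mul b _).trans_le
      (mul_le_mul_of_nonneg_left hlip (abs_nonneg b))
  have hconv := huber_le_huber_add_mul_clip hx a (a + b)
  rw [add_sub_cancel_left] at hconv
  linarith

lemma half_mul_abs_le_huber {s : ℝ} (hx : 0 ≤ x) (hs : x ≤ |s|) : x * |s| / 2 ≤ huber x s := by
  have htangent : x * |s| - x ^ 2 / 2 ≤ huber x s := by
    rcases abs_cases s with ⟨h, -⟩ | ⟨h, -⟩ <;> rw [h]
    · linarith [mul_sub_sq_le_huber (s := s) (abs_of_nonneg hx).le]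
    · linarith [mul_sub_sq_le_huber (s := s) (c := -x) (by rw [abs_neg, abs_of_nonneg hx])]
  nlinarith

lemma enorm_clip (M : ℝ≥0) (y : ℝ) : ‖clip M y‖ₑ = min ‖y‖ₑ M := by
  rw [Real.enorm_eq_ofReal_abs, abs_clip M.coe_nonneg, ENNReal.ofReal_min,
    ← Real.enorm_eq_ofReal_abs, ENNReal.ofReal_coe_nnreal]

lemma enorm_sub_clip (M : ℝ≥0) (y : ℝ) : ‖y - clip M y‖ₑ = ‖y‖ₑ - M := by
  rw [Real.enorm_eq_ofReal_abs, abs_sub_clip M.coe_nonneg, ENNReal.ofReal_max, ENNReal.ofReal_zero,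
    max_eq_left zero_le, ENNReal.ofReal_sub _ M.coe_nonneg, ← Real.enorm_eq_ofReal_abs,
    ENNReal.ofReal_coe_nnreal]

lemma memLp_clip_comp {Ω : Type*} [MeasurableSpace Ω] {P : Measure Ω} [IsFiniteMeasure P]
    {S : Ω → ℝ} (hx : 0 ≤ x) (hS : AEMeasurable S P) (r : ℝ≥0∞) :
    MemLp (fun ω ↦ clip x (S ω)) r P :=
  .of_bound ((measurable_clip x).comp_aemeasurable hS).aestronglyMeasurable x
    (.of_forall fun ω ↦ abs_clip_le hx (S ω))

end Huber

section PowerIntegrals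

lemma lintegral_Ioc_rpow {r c : ℝ} (hr : -1 < r) (hc : 0 ≤ c) :
    ∫⁻ x in Ioc 0 c, ENNReal.ofReal (x ^ r) = ENNReal.ofReal (c ^ (r + 1) / (r + 1)) := by
  rw [← ofReal_integral_eq_lintegral_ofReal, ← intervalIntegral.integral_of_le hc,
    integral_rpow (Or.inl hr), Real.zero_rpow (by linarith), sub_zero]
  · exact (intervalIntegrable_iff_integrableOn_Ioc_of_le hc).1
      (intervalIntegral.intervalIntegrable_rpow' hr)
  · filter_upwards [ae_restrict_mem measurableSet_Ioc] with x hx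
    exact Real.rpow_nonneg hx.1.le _

lemma lintegral_Ioi_rpow {r c : ℝ} (hr : r < -1) (hc : 0 < c) :
    ∫⁻ x in Ioi c, ENNReal.ofReal (x ^ r) = ENNReal.ofReal (-c ^ (r + 1) / (r + 1)) := by
  rw [← ofReal_integral_eq_lintegral_ofReal, integral_Ioi_rpow_of_lt hr hc]
  · exact integrableOn_Ioi_rpow_of_lt hr hc
  · filter_upwards [ae_restrict_mem measurableSet_Ioi] with x hx
    exact Real.rpow_nonneg (hc.trans hx).le _

lemma ofReal_rpow_mul_ofReal {x : ℝ} (hx : 0 < x) (r : ℝ) :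
    ENNReal.ofReal (x ^ r) * ENNReal.ofReal x = ENNReal.ofReal (x ^ (r + 1)) := by
  rw [← ENNReal.ofReal_mul (Real.rpow_nonneg hx.le _), Real.rpow_add_one hx.ne']

variable {p : ℝ}

/-- Keeping only the levels `x ≤ |s|`, where `huber x s` is at least `x * |s| / 2`, already yields
the power. -/
lemma enorm_rpow_le_lintegral_huber (hp : 1 < p) (s : ℝ) :
    ‖s‖ₑ ^ p ≤ ENNReal.ofReal (2 * (p - 1)) *
      ∫⁻ x in Ioi (0 : ℝ), ENNReal.ofReal (x ^ (p - 3)) * ENNReal.ofReal (huber x s) := by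
  have hp' : p - 1 ≠ 0 := (sub_pos.2 hp).ne'
  have hpow : |s| ^ p = 2 * (p - 1) * (|s| / 2 * (|s| ^ (p - 1) / (p - 1))) := by
    have h : |s| ^ (1 + (p - 1)) = |s| * |s| ^ (p - 1) :=
      Real.rpow_one_add' (abs_nonneg s) (by linarith)
    rw [add_sub_cancel] at h
    rw [h]
    field_simp
  have hlevel : ∀ x ∈ Ioc 0 |s|, ENNReal.ofReal (|s| / 2) * ENNReal.ofReal (x ^ (p - 2)) ≤
      ENNReal.ofReal (x ^ (p - 3)) * ENNReal.ofReal (huber x s) := fun x hx ↦ by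
    rw [show p - 2 = p - 3 + 1 by ring, ← ofReal_rpow_mul_ofReal hx.1, mul_left_comm,
      ← ENNReal.ofReal_mul (by positivity)]
    gcongr
    linarith [half_mul_abs_le_huber hx.1.le hx.2]
  calc ‖s‖ₑ ^ p = ENNReal.ofReal (2 * (p - 1)) *
        ∫⁻ x in Ioc 0 |s|, ENNReal.ofReal (|s| / 2) * ENNReal.ofReal (x ^ (p - 2)) := by
        rw [lintegral_const_mul _ (by fun_prop), lintegral_Ioc_rpow (by linarith) (abs_nonneg s),
          ← ENNReal.ofReal_mul (by positivity), ← ENNReal.ofReal_mul (by linarith),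
          show p - 2 + 1 = p - 1 by ring, ← hpow, Real.enorm_eq_ofReal_abs,
          ENNReal.ofReal_rpow_of_nonneg (abs_nonneg s) (by linarith)]
    _ ≤ ENNReal.ofReal (2 * (p - 1)) *
        ∫⁻ x in Ioc 0 |s|, ENNReal.ofReal (x ^ (p - 3)) * ENNReal.ofReal (huber x s) := by
        gcongr 1
        exact setLIntegral_mono' measurableSet_Ioc hlevel
    _ ≤ _ := by
        gcongr 1
        exact lintegral_mono_set Ioc_subset_Ioi_self

lemma lintegral_rpow_mul_min_ofReal_le (hp1 : 1 < p) (hp2 : p < 2) {r : ℝ} (hr : 0 < r) :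
    ∫⁻ x in Ioi (0 : ℝ), ENNReal.ofReal (x ^ (p - 3)) * min (ENNReal.ofReal x) (ENNReal.ofReal r) ≤
      ENNReal.ofReal (1 / ((p - 1) * (2 - p)) * r ^ (p - 1)) := by
  have hsmall : ∫⁻ x in Ioc 0 r,
      ENNReal.ofReal (x ^ (p - 3)) * min (ENNReal.ofReal x) (ENNReal.ofReal r) ≤
        ENNReal.ofReal (r ^ (p - 1) / (p - 1)) := by
    rw [show p - 1 = p - 3 + 1 + 1 by ring, ← lintegral_Ioc_rpow (by linarith) hr.le]
    refine setLIntegral_mono' measurableSet_Ioc fun x hx ↦ ?_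
    rw [← ofReal_rpow_mul_ofReal hx.1]
    gcongr
    exact min_le_left _ _
  have hlarge : ∫⁻ x in Ioi r,
      ENNReal.ofReal (x ^ (p - 3)) * min (ENNReal.ofReal x) (ENNReal.ofReal r) ≤
        ENNReal.ofReal (r ^ (p - 1) / (2 - p)) :=
    calc _ ≤ ∫⁻ x in Ioi r, ENNReal.ofReal (x ^ (p - 3)) * ENNReal.ofReal r := by
          gcongr
          exact min_le_right _ _
      _ = ENNReal.ofReal (-r ^ (p - 3 + 1) / (p - 3 + 1) * r) := by
          rw [lintegral_mul_const _ (by fun_prop), lintegral_Ioi_rpow (by linarith) hr,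
            ← ENNReal.ofReal_mul' hr.le]
      _ = ENNReal.ofReal (r ^ (p - 1) / (2 - p)) := by
          rw [show p - 1 = p - 3 + 1 + 1 by ring, Real.rpow_add_one hr.ne' (p - 3 + 1),
            show 2 - p = -(p - 3 + 1) by ring, div_neg, neg_div]
          congr 1
          ring
  have hp1' := sub_pos.2 hp1
  have hp2' := sub_pos.2 hp2
  rw [← Ioc_union_Ioi_eq_Ioi hr.le, lintegral_union measurableSet_Ioi (Ioc_disjoint_Ioi le_rfl)]
  refine (add_le_add hsmall hlarge).trans_eq ?_
  rw [← ENNReal.ofReal_add (by positivity) (by positivity)]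
  congr 1
  field_simp
  ring

lemma lintegral_rpow_mul_min_le (hp1 : 1 < p) (hp2 : p < 2) (r : ℝ≥0∞) :
    ∫⁻ x in Ioi (0 : ℝ), ENNReal.ofReal (x ^ (p - 3)) * min (ENNReal.ofReal x) r ≤
      ENNReal.ofReal (1 / ((p - 1) * (2 - p))) * r ^ (p - 1) := by
  have hpos : 0 < 1 / ((p - 1) * (2 - p)) :=
    one_div_pos.2 (mul_pos (sub_pos.2 hp1) (sub_pos.2 hp2))
  rcases eq_or_ne r ∞ with rfl | hr
  · rw [ENNReal.top_rpow_of_pos (sub_pos.2 hp1), ENNReal.mul_top (ENNReal.ofReal_pos.2 hpos).ne']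
    exact le_top
  rcases eq_or_ne r 0 with rfl | hr0
  · simp
  have hr_pos := ENNReal.toReal_pos hr0 hr
  have h := lintegral_rpow_mul_min_ofReal_le hp1 hp2 hr_pos
  rwa [ENNReal.ofReal_mul hpos.le, ← ENNReal.ofReal_rpow_of_pos hr_pos,
    ENNReal.ofReal_toReal hr] at h

end PowerIntegrals

section LayerCake

lemma volume_restrict_ofReal_lt (c : ℝ≥0∞) :
    volume.restrict (Ioi (0 : ℝ)) {s : ℝ | ENNReal.ofReal s < c} = c := by
  rw [Measure.restrict_apply (measurableSet_lt ENNReal.measurable_ofReal measurable_const)]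
  rcases eq_or_ne c ∞ with rfl | hc
  · simp
  · have hset : {s : ℝ | ENNReal.ofReal s < c} ∩ Ioi 0 = Ioo 0 c.toReal := by
      ext s
      rw [mem_inter_iff, mem_ofPred_eq, mem_Ioi, mem_Ioo, and_comm, and_congr_right_iff]
      exact fun hs ↦ ENNReal.ofReal_lt_iff_lt_toReal hs.le hc
    rw [hset, Real.volume_Ioo, sub_zero, ENNReal.ofReal_toReal hc]

lemma lintegral_mul_eq_lintegral_measure_inter {X : Type*} [MeasurableSpace X] (μ : Measure X)
    [SFinite μ] {f g : X → ℝ≥0∞} (hf : Measurable f) (hg : Measurable g) :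
    ∫⁻ x, f x * g x ∂μ =
      ∫⁻ z : ℝ × ℝ, μ ({x | ENNReal.ofReal z.1 < f x} ∩ {x | ENNReal.ofReal z.2 < g x})
        ∂((volume.restrict (Ioi 0)).prod (volume.restrict (Ioi 0))) := by
  have hE : MeasurableSet ({y : X × ℝ × ℝ | ENNReal.ofReal y.2.1 < f y.1} ∩
      {y | ENNReal.ofReal y.2.2 < g y.1}) :=
    (measurableSet_lt (by fun_prop) (by fun_prop)).inter
      (measurableSet_lt (by fun_prop) (by fun_prop))
  refine Eq.trans (lintegral_congr fun x ↦ ?_)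
    ((Measure.prod_apply hE).symm.trans (Measure.prod_apply_symm hE))
  have hrect : Prod.mk x ⁻¹' ({y : X × ℝ × ℝ | ENNReal.ofReal y.2.1 < f y.1} ∩
      {y | ENNReal.ofReal y.2.2 < g y.1}) =
      {s | ENNReal.ofReal s < f x} ×ˢ {t | ENNReal.ofReal t < g x} := rfl
  rw [hrect, Measure.prod_prod, volume_restrict_ofReal_lt, volume_restrict_ofReal_lt]

lemma measurable_measure_ofReal_lt {X : Type*} [MeasurableSpace X] (μ : Measure X) [SFinite μ]
    {f : X → ℝ≥0∞} (hf : Measurable f) : Measurable fun s ↦ μ {x | ENNReal.ofReal s < f x} :=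
  measurable_measure_prodMk_left (s := {y : ℝ × X | ENNReal.ofReal y.1 < f y.2})
    (measurableSet_lt (by fun_prop) (by fun_prop))

lemma measurable_measure_ofReal_lt_inter {X : Type*} [MeasurableSpace X] (μ : Measure X) [SFinite μ]
    {f g : X → ℝ≥0∞} (hf : Measurable f) (hg : Measurable g) :
    Measurable fun z : ℝ × ℝ ↦
      μ ({x | ENNReal.ofReal z.1 < f x} ∩ {x | ENNReal.ofReal z.2 < g x}) :=
  measurable_measure_prodMk_left (s := {y : (ℝ × ℝ) × X | ENNReal.ofReal y.1.1 < f y.2} ∩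
    {y | ENNReal.ofReal y.1.2 < g y.2})
    ((measurableSet_lt (by fun_prop) (by fun_prop)).inter
      (measurableSet_lt (by fun_prop) (by fun_prop)))

lemma lintegral_mul_lintegral_eq_lintegral_measure {X : Type*} [MeasurableSpace X] (μ : Measure X)
    [SFinite μ] {f g : X → ℝ≥0∞} (hf : Measurable f) (hg : Measurable g) :
    (∫⁻ x, f x ∂μ) * ∫⁻ x, g x ∂μ =
      ∫⁻ z : ℝ × ℝ, μ {x | ENNReal.ofReal z.1 < f x} * μ {x | ENNReal.ofReal z.2 < g x}
        ∂((volume.restrict (Ioi 0)).prod (volume.restrict (Ioi 0))) := by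
  rw [← lintegral_prod_mul hf.aemeasurable hg.aemeasurable]
  refine (lintegral_mul_eq_lintegral_measure_inter _ (hf.comp measurable_fst)
    (hg.comp measurable_snd)).trans (lintegral_congr fun z ↦ ?_)
  rw [← Measure.prod_prod]
  rfl

end LayerCake

section TailQuantile

/-- The upper quantile function of `f` under `P`: `tailQuantile P f u` is the least value which `f`
exceeds with probability at most `u`. -/
noncomputable def tailQuantile {Ω : Type*} [MeasurableSpace Ω] (P : Measure Ω) (f : Ω → ℝ≥0∞)
    (u : ℝ) : ℝ≥0∞ :=
  sInf {t | P {ω | t < f ω} ≤ ENNReal.ofReal u}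

/-- `F` dominates the upper quantile function of `f` under `P`: the value `F u` is exceeded by `f`
with probability at most `u`. -/
def IsTailEnvelope {Ω : Type*} [MeasurableSpace Ω] (P : Measure Ω) (f : Ω → ℝ≥0∞)
    (F : ℝ → ℝ≥0∞) : Prop :=
  ∀ u, P {ω | F u < f ω} ≤ ENNReal.ofReal u

variable {Ω : Type*} [MeasurableSpace Ω] {P : Measure Ω} {f g : Ω → ℝ≥0∞} {F G : ℝ → ℝ≥0∞}

lemma antitone_tailQuantile (P : Measure Ω) (f : Ω → ℝ≥0∞) : Antitone (tailQuantile P f) :=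
  fun _ _ huv ↦ sInf_le_sInf fun _ ht ↦ le_trans ht (ENNReal.ofReal_le_ofReal huv)

lemma isTailEnvelope_tailQuantile (P : Measure Ω) (f : Ω → ℝ≥0∞) :
    IsTailEnvelope P f (tailQuantile P f) := fun u ↦ by
  have hne : {t | P {ω | t < f ω} ≤ ENNReal.ofReal u}.Nonempty := ⟨∞, by simp⟩
  obtain ⟨v, hv, hlim, hmem⟩ := exists_seq_tendsto_sInf hne (OrderBot.bddBelow _)
  have hsub : {ω | tailQuantile P f u < f ω} ⊆ ⋃ n, {ω | v n < f ω} := fun ω hω ↦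
    mem_iUnion.2 (hlim.eventually (gt_mem_nhds hω)).exists
  have hmono : Monotone fun n ↦ {ω | v n < f ω} := fun _ _ hmn _ hω ↦ (hv hmn).trans_lt hω
  calc P {ω | tailQuantile P f u < f ω} ≤ P (⋃ n, {ω | v n < f ω}) := measure_mono hsub
    _ = ⨆ n, P {ω | v n < f ω} := hmono.measure_iUnion
    _ ≤ ENNReal.ofReal u := iSup_le hmem

lemma IsTailEnvelope.lt_of_lt_measure (hF : IsTailEnvelope P f F) {u : ℝ} {t : ℝ≥0∞}
    (h : ENNReal.ofReal u < P {ω | t < f ω}) : t < F u := by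
  contrapose! h
  exact (measure_mono fun _ hω ↦ lt_of_le_of_lt h hω).trans (hF u)

lemma lt_tailQuantile_iff {u : ℝ} {t : ℝ≥0∞} :
    t < tailQuantile P f u ↔ ENNReal.ofReal u < P {ω | t < f ω} := by
  refine ⟨fun h ↦ ?_, (isTailEnvelope_tailQuantile P f).lt_of_lt_measure⟩
  contrapose! h
  exact sInf_le h

lemma lowerSemicontinuous_tailQuantile (P : Measure Ω) (f : Ω → ℝ≥0∞) :
    LowerSemicontinuous (tailQuantile P f) :=
  lowerSemicontinuous_iff_isOpen_preimage.2 fun t ↦ by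
    have h : tailQuantile P f ⁻¹' Ioi t = {u | ENNReal.ofReal u < P {ω | t < f ω}} :=
      Set.ext fun u ↦ lt_tailQuantile_iff
    rw [h]
    exact isOpen_lt ENNReal.continuous_ofReal continuous_const

lemma map_tailQuantile [IsProbabilityMeasure P] (hf : Measurable f) :
    (volume.restrict (Ioc (0 : ℝ) 1)).map (tailQuantile P f) = P.map f := by
  have hQ := (antitone_tailQuantile P f).measurable
  have : IsProbabilityMeasure (volume.restrict (Ioc (0 : ℝ) 1)) := ⟨by simp⟩
  have := Measure.isProbabilityMeasure_map (μ := P) hf.aemeasurable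
  have := Measure.isProbabilityMeasure_map (μ := volume.restrict (Ioc (0 : ℝ) 1)) hQ.aemeasurable
  refine Measure.ext_of_Iic _ _ fun t ↦ ?_
  have hset : tailQuantile P f ⁻¹' Ioi t ∩ Ioc 0 1 =
      {u | ENNReal.ofReal u < P {ω | t < f ω}} ∩ Ioi 0 := by
    ext u
    rw [mem_inter_iff, mem_inter_iff, mem_preimage, mem_Ioi, lt_tailQuantile_iff]
    exact ⟨fun h ↦ ⟨h.1, h.2.1⟩,
      fun h ↦ ⟨h.1, h.2, ENNReal.ofReal_le_one.1 (h.1.le.trans prob_le_one)⟩⟩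
  rw [← compl_Ioi, prob_compl_eq_one_sub measurableSet_Ioi, prob_compl_eq_one_sub measurableSet_Ioi,
    Measure.map_apply hf measurableSet_Ioi, Measure.map_apply hQ measurableSet_Ioi,
    Measure.restrict_apply (hQ measurableSet_Ioi), hset, ← Measure.restrict_apply
    (measurableSet_lt ENNReal.measurable_ofReal measurable_const), volume_restrict_ofReal_lt]
  rfl

lemma lintegral_comp_tailQuantile [IsProbabilityMeasure P] (hf : Measurable f)
    {φ : ℝ≥0∞ → ℝ≥0∞} (hφ : Measurable φ) :
    ∫⁻ u in Ioc (0 : ℝ) 1, φ (tailQuantile P f u) = ∫⁻ ω, φ (f ω) ∂P := by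
  rw [← lintegral_map hφ hf, ← map_tailQuantile hf,
    lintegral_map hφ (antitone_tailQuantile P f).measurable]

lemma IsTailEnvelope.lintegral_le [IsProbabilityMeasure P] (hF : IsTailEnvelope P f F)
    (hf : Measurable f) : ∫⁻ ω, f ω ∂P ≤ ∫⁻ u in Ioc (0 : ℝ) 1, F u :=
  (lintegral_comp_tailQuantile hf measurable_id).symm.trans_le
    (lintegral_mono fun u ↦ sInf_le (hF u))

lemma IsTailEnvelope.mono_left (hg : IsTailEnvelope P g F) (hfg : f ≤ g) :
    IsTailEnvelope P f F := fun u ↦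
  (measure_mono fun _ hω ↦ lt_of_lt_of_le hω (hfg _)).trans (hg u)

lemma IsTailEnvelope.comp_monotone (hf : IsTailEnvelope P f F) {φ : ℝ≥0∞ → ℝ≥0∞}
    (hφ : Monotone φ) : IsTailEnvelope P (fun ω ↦ φ (f ω)) fun u ↦ φ (F u) := fun u ↦
  (measure_mono fun _ hω ↦ hφ.reflect_lt hω).trans (hf u)

lemma isTailEnvelope_const {c : ℝ≥0∞} (hf : ∀ ω, f ω ≤ c) :
    IsTailEnvelope P f fun _ ↦ c := fun u ↦ by
  have hempty : {ω | c < f ω} = ∅ := eq_empty_of_forall_notMem fun ω hω ↦ (hf ω).not_gt hω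
  simp [hempty]

lemma IsTailEnvelope.min_measure_le (hf : IsTailEnvelope P f F) (hg : IsTailEnvelope P g G)
    (hF : Measurable F) (hG : Measurable G) (a : ℝ) (s t : ℝ≥0∞) :
    min (ENNReal.ofReal a) (min (P {ω | s < f ω}) (P {ω | t < g ω})) ≤
      volume.restrict (Ioo 0 a) ({u | s < F u} ∩ {u | t < G u}) := by
  rw [← volume_restrict_ofReal_lt (min _ _), Measure.restrict_apply
    (measurableSet_lt ENNReal.measurable_ofReal measurable_const), Measure.restrict_apply
    ((measurableSet_lt measurable_const hF).inter (measurableSet_lt measurable_const hG))]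
  refine measure_mono fun u ⟨hu, hu0⟩ ↦ ?_
  rw [mem_ofPred_eq, lt_min_iff, lt_min_iff] at hu
  exact ⟨⟨hf.lt_of_lt_measure hu.2.1, hg.lt_of_lt_measure hu.2.2⟩, hu0,
    (ENNReal.ofReal_lt_ofReal_iff'.1 hu.1).1⟩

end TailQuantile

section AlphaMixing

/-- The Rosenblatt (strong) mixing coefficient of two σ-algebras. -/
noncomputable def alphaMixing {Ω : Type*} [MeasurableSpace Ω] (P : Measure Ω)
    (𝓤 𝓥 : MeasurableSpace Ω) : ℝ :=
  sSup {r | ∃ A B, MeasurableSet[𝓤] A ∧ MeasurableSet[𝓥] B ∧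
    r = |P.real A * P.real B - P.real (A ∩ B)|}

variable {Ω : Type*} {𝓤 𝓤' 𝓥 𝓥' mΩ : MeasurableSpace Ω} {P : Measure Ω}
  [IsProbabilityMeasure P] {A B : Set Ω}

lemma abs_measureReal_mul_sub_inter_le_half (hB : MeasurableSet B) :
    |P.real A * P.real B - P.real (A ∩ B)| ≤ 1 / 2 := by
  have hA : P.real (A ∩ B) + P.real (A \ B) = P.real A := measureReal_inter_add_sdiff hB
  have hAB : P.real (A ∩ B) ≤ P.real B := measureReal_mono inter_subset_right
  have hdiff : P.real (A \ B) ≤ 1 - P.real B := by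
    rw [← probReal_compl_eq_one_sub hB]
    exact measureReal_mono fun ω hω ↦ hω.2
  have h₁ : 0 ≤ P.real (A ∩ B) := measureReal_nonneg
  have h₂ : 0 ≤ P.real (A \ B) := measureReal_nonneg
  rw [abs_le, ← hA]
  constructor <;> nlinarith [sq_nonneg (P.real B - 1 / 2)]

lemma bddAbove_alphaMixing : BddAbove {r | ∃ A B, MeasurableSet[𝓤] A ∧ MeasurableSet[𝓥] B ∧
    r = |P.real A * P.real B - P.real (A ∩ B)|} := by
  refine ⟨1, ?_⟩
  rintro _ ⟨A, B, -, -, rfl⟩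
  have hmul : P.real A * P.real B ≤ 1 :=
    mul_le_one₀ measureReal_le_one measureReal_nonneg measureReal_le_one
  exact abs_sub_le_of_nonneg_of_le (by positivity) hmul measureReal_nonneg measureReal_le_one

lemma le_alphaMixing (hA : MeasurableSet[𝓤] A) (hB : MeasurableSet[𝓥] B) :
    |P.real A * P.real B - P.real (A ∩ B)| ≤ alphaMixing P 𝓤 𝓥 :=
  le_csSup bddAbove_alphaMixing ⟨A, B, hA, hB, rfl⟩

lemma alphaMixing_mono (h𝓤 : 𝓤 ≤ 𝓤') (h𝓥 : 𝓥 ≤ 𝓥') :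
    alphaMixing P 𝓤 𝓥 ≤ alphaMixing P 𝓤' 𝓥' := by
  refine csSup_le_csSup bddAbove_alphaMixing
    ⟨_, ∅, ∅, @MeasurableSet.empty _ 𝓤, @MeasurableSet.empty _ 𝓥, rfl⟩ ?_
  rintro _ ⟨A, B, hA, hB, rfl⟩
  exact ⟨A, B, h𝓤 A hA, h𝓥 B hB, rfl⟩

lemma alphaMixing_le_half (h𝓥 : 𝓥 ≤ mΩ) : alphaMixing P 𝓤 𝓥 ≤ 1 / 2 := by
  refine csSup_le ⟨_, ∅, ∅, @MeasurableSet.empty _ 𝓤, @MeasurableSet.empty _ 𝓥, rfl⟩ ?_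
  rintro _ ⟨A, B, -, hB, rfl⟩
  exact abs_measureReal_mul_sub_inter_le_half (h𝓥 B hB)

lemma measure_inter_le_mul_add_alphaMixing
    (hA : MeasurableSet[𝓤] A) (hB : MeasurableSet[𝓥] B) :
    P (A ∩ B) ≤ P A * P B + min (ENNReal.ofReal (alphaMixing P 𝓤 𝓥)) (min (P A) (P B)) := by
  rw [← min_add_add_left, ← min_add_add_left, le_min_iff, le_min_iff]
  refine ⟨?_, (measure_mono inter_subset_left).trans le_add_self,
    (measure_mono inter_subset_right).trans le_add_self⟩
  have h := (abs_le.1 (le_alphaMixing (P := P) hA hB)).1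
  rw [← ofReal_measureReal (μ := P) (s := A), ← ofReal_measureReal (μ := P) (s := B),
    ← ofReal_measureReal (μ := P) (s := A ∩ B), ← ENNReal.ofReal_mul measureReal_nonneg]
  exact (ENNReal.ofReal_le_ofReal (by linarith)).trans ENNReal.ofReal_add_le

lemma measure_mul_le_inter_add_alphaMixing
    (hA : MeasurableSet[𝓤] A) (hB : MeasurableSet[𝓥] B) :
    P A * P B ≤ P (A ∩ B) + min (ENNReal.ofReal (alphaMixing P 𝓤 𝓥)) (min (P A) (P B)) := by
  rw [← min_add_add_left, ← min_add_add_left, le_min_iff, le_min_iff]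
  refine ⟨?_, (mul_le_of_le_one_right' prob_le_one).trans le_add_self,
    (mul_le_of_le_one_left' prob_le_one).trans le_add_self⟩
  have h := (abs_le.1 (le_alphaMixing (P := P) hA hB)).2
  rw [← ofReal_measureReal (μ := P) (s := A), ← ofReal_measureReal (μ := P) (s := B),
    ← ofReal_measureReal (μ := P) (s := A ∩ B), ← ENNReal.ofReal_mul measureReal_nonneg]
  exact (ENNReal.ofReal_le_ofReal (by linarith)).trans ENNReal.ofReal_add_le

end AlphaMixing

section Covariance

variable {Ω : Type*} {𝓤 𝓥 mΩ : MeasurableSpace Ω} {P : Measure Ω} [IsProbabilityMeasure P]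
  {F G : ℝ → ℝ≥0∞}

section Nonnegative

variable {f g : Ω → ℝ≥0∞}

lemma lintegral_mul_le_mul_lintegral_add (h𝓤 : 𝓤 ≤ mΩ) (h𝓥 : 𝓥 ≤ mΩ)
    (hf : Measurable[𝓤] f) (hg : Measurable[𝓥] g) (hF : Measurable F) (hG : Measurable G)
    (hfF : IsTailEnvelope P f F) (hgG : IsTailEnvelope P g G) :
    ∫⁻ ω, f ω * g ω ∂P ≤ (∫⁻ ω, f ω ∂P) * (∫⁻ ω, g ω ∂P) +
      ∫⁻ u in Ioo 0 (alphaMixing P 𝓤 𝓥), F u * G u := by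
  have hf' := hf.mono h𝓤 le_rfl
  have hg' := hg.mono h𝓥 le_rfl
  have hmeas : Measurable fun z : ℝ × ℝ ↦
      P {ω | ENNReal.ofReal z.1 < f ω} * P {ω | ENNReal.ofReal z.2 < g ω} :=
    ((measurable_measure_ofReal_lt P hf').comp measurable_fst).mul
      ((measurable_measure_ofReal_lt P hg').comp measurable_snd)
  rw [lintegral_mul_lintegral_eq_lintegral_measure P hf' hg',
    lintegral_mul_eq_lintegral_measure_inter P hf' hg',
    lintegral_mul_eq_lintegral_measure_inter _ hF hG, ← lintegral_add_left hmeas]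
  exact lintegral_mono fun z ↦ (measure_inter_le_mul_add_alphaMixing
    (hf measurableSet_Ioi) (hg measurableSet_Ioi)).trans
      (add_le_add_right (hfF.min_measure_le hgG hF hG _ _ _) _)

lemma mul_lintegral_le_lintegral_mul_add (h𝓤 : 𝓤 ≤ mΩ) (h𝓥 : 𝓥 ≤ mΩ)
    (hf : Measurable[𝓤] f) (hg : Measurable[𝓥] g) (hF : Measurable F) (hG : Measurable G)
    (hfF : IsTailEnvelope P f F) (hgG : IsTailEnvelope P g G) :
    (∫⁻ ω, f ω ∂P) * (∫⁻ ω, g ω ∂P) ≤ ∫⁻ ω, f ω * g ω ∂P +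
      ∫⁻ u in Ioo 0 (alphaMixing P 𝓤 𝓥), F u * G u := by
  have hf' := hf.mono h𝓤 le_rfl
  have hg' := hg.mono h𝓥 le_rfl
  rw [lintegral_mul_lintegral_eq_lintegral_measure P hf' hg',
    lintegral_mul_eq_lintegral_measure_inter P hf' hg',
    lintegral_mul_eq_lintegral_measure_inter _ hF hG,
    ← lintegral_add_right _ (measurable_measure_ofReal_lt_inter _ hF hG)]
  exact lintegral_mono fun z ↦ (measure_mul_le_inter_add_alphaMixing
    (hf measurableSet_Ioi) (hg measurableSet_Ioi)).trans
      (add_le_add_right (hfF.min_measure_le hgG hF hG _ _ _) _)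

end Nonnegative

variable {X Z : Ω → ℝ}

lemma enorm_covariance_le_of_nonneg (h𝓤 : 𝓤 ≤ mΩ) (h𝓥 : 𝓥 ≤ mΩ)
    (hX : Measurable[𝓤] X) (hZ : Measurable[𝓥] Z) (hX2 : MemLp X 2 P) (hZ2 : MemLp Z 2 P)
    (hX0 : 0 ≤ X) (hZ0 : 0 ≤ Z) (hF : Measurable F) (hG : Measurable G)
    (hXF : IsTailEnvelope P (fun ω ↦ ‖X ω‖ₑ) F) (hZG : IsTailEnvelope P (fun ω ↦ ‖Z ω‖ₑ) G) :
    ‖cov[X, Z; P]‖ₑ ≤ ∫⁻ u in Ioo 0 (alphaMixing P 𝓤 𝓥), F u * G u := by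
  have hXZ0 : 0 ≤ X * Z := mul_nonneg hX0 hZ0
  have hlintegral {U : Ω → ℝ} (hU : Integrable U P) (hU0 : 0 ≤ U) :
      ENNReal.ofReal (∫ ω, U ω ∂P) = ∫⁻ ω, ‖U ω‖ₑ ∂P := by
    rw [← ofReal_integral_norm_eq_lintegral_enorm hU]
    simp only [Real.norm_of_nonneg (hU0 _)]
  have hX1 := hlintegral (hX2.integrable one_le_two) hX0
  have hZ1 := hlintegral (hZ2.integrable one_le_two) hZ0
  have hXZ1 := hlintegral (hX2.integrable_mul hZ2) hXZ0
  simp only [Pi.mul_apply, enorm_mul] at hXZ1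
  have hX_enorm : Measurable[𝓤] fun ω ↦ ‖X ω‖ₑ := measurable_enorm.comp hX
  have hZ_enorm : Measurable[𝓥] fun ω ↦ ‖Z ω‖ₑ := measurable_enorm.comp hZ
  have hupper := lintegral_mul_le_mul_lintegral_add h𝓤 h𝓥 hX_enorm hZ_enorm hF hG hXF hZG
  have hlower := mul_lintegral_le_lintegral_mul_add h𝓤 h𝓥 hX_enorm hZ_enorm hF hG hXF hZG
  rw [← hX1, ← hZ1, ← hXZ1, ← ENNReal.ofReal_mul (integral_nonneg hX0)] at hupper hlower
  rw [covariance_eq_sub hX2 hZ2, Real.enorm_eq_ofReal_abs, abs_eq_max_neg, neg_sub,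
    ENNReal.ofReal_max, max_le_iff, ENNReal.ofReal_sub _ (integral_nonneg hXZ0),
    ENNReal.ofReal_sub _ (mul_nonneg (integral_nonneg hX0) (integral_nonneg hZ0))]
  exact ⟨tsub_le_iff_left.2 hupper, tsub_le_iff_left.2 hlower⟩

lemma enorm_covariance_comp_le_of_nonneg (h𝓤 : 𝓤 ≤ mΩ) (h𝓥 : 𝓥 ≤ mΩ)
    (hX : Measurable[𝓤] X) (hZ : Measurable[𝓥] Z) (hX2 : MemLp X 2 P) (hZ2 : MemLp Z 2 P)
    (hF : Measurable F) (hG : Measurable G)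
    (hXF : IsTailEnvelope P (fun ω ↦ ‖X ω‖ₑ) F) (hZG : IsTailEnvelope P (fun ω ↦ ‖Z ω‖ₑ) G)
    {φ ψ : ℝ → ℝ} (hφ : Measurable φ) (hψ : Measurable ψ) (hφ0 : 0 ≤ φ) (hψ0 : 0 ≤ ψ)
    (hφ_le : ∀ s, |φ s| ≤ |s|) (hψ_le : ∀ s, |ψ s| ≤ |s|) :
    ‖cov[φ ∘ X, ψ ∘ Z; P]‖ₑ ≤ ∫⁻ u in Ioo 0 (alphaMixing P 𝓤 𝓥), F u * G u :=
  enorm_covariance_le_of_nonneg h𝓤 h𝓥 (hφ.comp hX) (hψ.comp hZ)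
    (hX2.mono (hφ.comp (hX.mono h𝓤 le_rfl)).aestronglyMeasurable (.of_forall fun ω ↦ hφ_le (X ω)))
    (hZ2.mono (hψ.comp (hZ.mono h𝓥 le_rfl)).aestronglyMeasurable (.of_forall fun ω ↦ hψ_le (Z ω)))
    (fun ω ↦ hφ0 (X ω)) (fun ω ↦ hψ0 (Z ω)) hF hG
    (hXF.mono_left fun ω ↦ enorm_le_iff_norm_le.2 (hφ_le (X ω)))
    (hZG.mono_left fun ω ↦ enorm_le_iff_norm_le.2 (hψ_le (Z ω)))

/-- **Rio's covariance inequality**. The factor `4` comes from splitting both variables into their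
positive and negative parts. -/
lemma enorm_covariance_le (h𝓤 : 𝓤 ≤ mΩ) (h𝓥 : 𝓥 ≤ mΩ)
    (hX : Measurable[𝓤] X) (hZ : Measurable[𝓥] Z) (hX2 : MemLp X 2 P) (hZ2 : MemLp Z 2 P)
    (hF : Measurable F) (hG : Measurable G)
    (hXF : IsTailEnvelope P (fun ω ↦ ‖X ω‖ₑ) F) (hZG : IsTailEnvelope P (fun ω ↦ ‖Z ω‖ₑ) G) :
    ‖cov[X, Z; P]‖ₑ ≤ 4 * ∫⁻ u in Ioo 0 (alphaMixing P 𝓤 𝓥), F u * G u := by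
  let pos : ℝ → ℝ := fun s ↦ max s 0
  let neg : ℝ → ℝ := fun s ↦ max (-s) 0
  have hpos_le (s : ℝ) : |pos s| ≤ |s| := by grind
  have hneg_le (s : ℝ) : |neg s| ≤ |s| := by grind
  have hpos_meas : Measurable pos := by fun_prop
  have hneg_meas : Measurable neg := by fun_prop
  have hpart {φ ψ : ℝ → ℝ} := enorm_covariance_comp_le_of_nonneg (φ := φ) (ψ := ψ)
    h𝓤 h𝓥 hX hZ hX2 hZ2 hF hG hXF hZG
  have hpos0 : 0 ≤ pos := fun s ↦ le_max_right _ _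
  have hneg0 : 0 ≤ neg := fun s ↦ le_max_right _ _
  have hsplit (U : Ω → ℝ) : U = pos ∘ U - neg ∘ U :=
    funext fun ω ↦ (posPart_sub_negPart (U ω)).symm
  have hcov : cov[X, Z; P] = cov[pos ∘ X, pos ∘ Z; P] - cov[pos ∘ X, neg ∘ Z; P] -
      cov[neg ∘ X, pos ∘ Z; P] + cov[neg ∘ X, neg ∘ Z; P] := by
    conv_lhs => rw [hsplit X, hsplit Z]
    exact covariance_sub_sub hX2.pos_part hX2.neg_part hZ2.pos_part hZ2.neg_part
  set I := ∫⁻ u in Ioo 0 (alphaMixing P 𝓤 𝓥), F u * G u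
  calc ‖cov[X, Z; P]‖ₑ ≤ ‖cov[pos ∘ X, pos ∘ Z; P]‖ₑ + ‖cov[pos ∘ X, neg ∘ Z; P]‖ₑ +
        ‖cov[neg ∘ X, pos ∘ Z; P]‖ₑ + ‖cov[neg ∘ X, neg ∘ Z; P]‖ₑ := by
        rw [hcov]
        refine (enorm_add_le _ _).trans ?_
        gcongr
        refine enorm_sub_le.trans ?_
        gcongr
        exact enorm_sub_le
    _ ≤ I + I + I + I := by
        gcongr
        · exact hpart hpos_meas hpos_meas hpos0 hpos0 hpos_le hpos_le
        · exact hpart hpos_meas hneg_meas hpos0 hneg0 hpos_le hneg_le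
        · exact hpart hneg_meas hpos_meas hneg0 hpos0 hneg_le hpos_le
        · exact hpart hneg_meas hneg_meas hneg0 hneg0 hneg_le hneg_le
    _ = 4 * I := by ring

end Covariance

section SeqInverse

/-- The generalized inverse `α⁻¹ u = inf {m | α m ≤ u}` of a sequence of real numbers, which is `∞`
when no term of the sequence is at most `u`. -/
noncomputable def seqInverse (α : ℕ → ℝ) (u : ℝ) : ℝ≥0∞ :=
  sInf ((fun m : ℕ ↦ (m : ℝ≥0∞)) '' {m | α m ≤ u})

variable {α : ℕ → ℝ} {u : ℝ}

lemma antitone_seqInverse (α : ℕ → ℝ) : Antitone (seqInverse α) := fun _ _ huv ↦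
  sInf_le_sInf (image_mono fun _ hm ↦ le_trans hm huv)

lemma seqInverse_le {m : ℕ} (h : α m ≤ u) : seqInverse α u ≤ m :=
  sInf_le ⟨m, h, rfl⟩

lemma exists_seqInverse_eq (h : seqInverse α u ≠ ∞) : ∃ m, α m ≤ u ∧ seqInverse α u = m := by
  have hne : {m | α m ≤ u}.Nonempty := by
    contrapose! h
    rw [seqInverse, h, image_empty, _root_.sInf_empty]
  have hmem : α (sInf {m | α m ≤ u}) ≤ u := Nat.sInf_mem hne
  refine ⟨_, hmem, (seqInverse_le hmem).antisymm (le_sInf ?_)⟩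
  rintro _ ⟨m, hm, rfl⟩
  exact Nat.cast_le.2 (Nat.sInf_le hm)

lemma add_one_le_seqInverse (hα : Antitone α) {k : ℕ} (h : u < α k) :
    (k : ℝ≥0∞) + 1 ≤ seqInverse α u := by
  refine le_sInf ?_
  rintro _ ⟨m, hm, rfl⟩
  exact Nat.cast_add_one (R := ℝ≥0∞) k ▸ Nat.cast_le.2 (hα.reflect_lt (lt_of_le_of_lt hm h))

lemma one_le_seqInverse (hα : Antitone α) (h : u < α 0) : 1 ≤ seqInverse α u := by
  simpa using add_one_le_seqInverse hα h

lemma lowerSemicontinuous_seqInverse (hα : Antitone α) : LowerSemicontinuous (seqInverse α) := by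
  intro u y hy
  lift y to ℝ≥0 using hy.ne_top
  have hu : u < α ⌊y⌋₊ := by
    contrapose! hy
    exact (seqInverse_le hy).trans (by exact_mod_cast Nat.floor_le zero_le)
  filter_upwards [gt_mem_nhds hu] with v hv
  refine lt_of_lt_of_le ?_ (add_one_le_seqInverse hα hv)
  exact_mod_cast Nat.lt_floor_add_one y

lemma card_filter_lt_le_seqInverse (hα : Antitone α) (q : ℕ) (u : ℝ) :
    ((Finset.Ico 1 (q + 1)).filter fun k ↦ u < α k).card ≤ seqInverse α u := by
  by_cases h : seqInverse α u = ∞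
  · simp [h]
  obtain ⟨m, hm, heq⟩ := exists_seqInverse_eq h
  have hsub : (Finset.Ico 1 (q + 1)).filter (fun k ↦ u < α k) ⊆ Finset.Ico 1 m := fun k hk ↦ by
    obtain ⟨hk1, hku⟩ := Finset.mem_filter.1 hk
    exact Finset.mem_Ico.2 ⟨(Finset.mem_Ico.1 hk1).1, hα.reflect_lt (hm.trans_lt hku)⟩
  rw [heq]
  exact_mod_cast (Finset.card_le_card hsub).trans (by simp)

end SeqInverse

section TruncationLevel

lemma lowerSemicontinuous_mul_ennreal {X : Type*} [TopologicalSpace X] {f g : X → ℝ≥0∞}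
    (hf : LowerSemicontinuous f) (hg : LowerSemicontinuous g) :
    LowerSemicontinuous fun x ↦ f x * g x := by
  intro x y hy
  obtain ⟨a, ha, b, hb, hab⟩ : ∃ a < f x, ∃ b < g x, y < a * b := by
    contrapose! hy
    exact ENNReal.mul_le_of_forall_lt hy
  filter_upwards [hf x a ha, hg x b hb] with z hfz hgz
  exact hab.trans_le (mul_le_mul' hfz.le hgz.le)

variable {α : ℕ → ℝ} {Q : ℝ → ℝ≥0∞} {x : ℝ≥0∞}

/-- `u₀` is the point where the antitone function `seqInverse α * Q` crosses the level `x`. -/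
lemma exists_truncation_level (hα : Antitone α) (hα0 : α 0 = 1 / 2)
    (hQ : LowerSemicontinuous Q) (hQ_fin : Q (1 / 2) ≠ ∞) (hx : x ≠ ∞) :
    ∃ (u₀ : ℝ) (M : ℝ≥0) (q : ℕ), u₀ ≤ 1 / 2 ∧ (∀ u, 0 ≤ u → u < u₀ → x ≤ seqInverse α u * Q u) ∧
      Q u₀ = M ∧ q * M ≤ x ∧ (α q ≤ u₀ ∨ M = 0) := by
  set A : Set ℝ := Ici 0 ∩ {u | seqInverse α u * Q u ≤ x}
  have hA : IsClosed A := isClosed_Ici.inter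
    ((lowerSemicontinuous_mul_ennreal (lowerSemicontinuous_seqInverse hα) hQ).isClosed_preimage x)
  have hhalf : (1 / 2 : ℝ) ∈ A := by
    have hinv : seqInverse α (1 / 2) = 0 :=
      nonpos_iff_eq_zero.1 ((seqInverse_le hα0.le).trans_eq Nat.cast_zero)
    refine ⟨mem_Ici.2 (by norm_num), ?_⟩
    rw [mem_ofPred_eq, hinv, zero_mul]
    exact zero_le
  have hbdd : BddBelow A := ⟨0, fun u hu ↦ hu.1⟩
  obtain ⟨⟨-, hcross⟩, hleast⟩ := hA.isLeast_csInf ⟨_, hhalf⟩ hbdd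
  set u₀ := sInf A
  have hbelow (u : ℝ) (hu0 : 0 ≤ u) (hu : u < u₀) : x ≤ seqInverse α u * Q u := by
    contrapose! hu
    exact hleast ⟨hu0, hu.le⟩
  have hM : Q u₀ ≠ ∞ := by
    rcases (hleast hhalf).eq_or_lt with h | h
    · rwa [h]
    · have hinv : 1 ≤ seqInverse α u₀ := one_le_seqInverse hα (hα0 ▸ h)
      exact ne_top_of_le_ne_top hx ((le_mul_of_one_le_left' hinv).trans hcross)
  refine ⟨u₀, (Q u₀).toNNReal, ?_⟩
  rw [ENNReal.coe_toNNReal hM]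
  rcases eq_or_ne (Q u₀) 0 with hM0 | hM0
  · exact ⟨0, hleast hhalf, hbelow, rfl, by simp, Or.inr (by simp [hM0])⟩
  · obtain ⟨q, hq, heq⟩ := exists_seqInverse_eq (u := u₀) fun h ↦ by
      rw [mem_ofPred_eq, h, ENNReal.top_mul hM0] at hcross
      exact hx (top_le_iff.1 hcross)
    exact ⟨q, hleast hhalf, hbelow, rfl, heq ▸ hcross, Or.inl hq⟩

lemma lintegral_Ioc_one_le_of_antitone {φ : ℝ → ℝ≥0∞} (hφ : Antitone φ) :
    ∫⁻ u in Ioc (0 : ℝ) 1, φ u ≤ 2 * ∫⁻ u in Ioc (0 : ℝ) (1 / 2), φ u := by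
  have hright : ∫⁻ u in Ioc (1 / 2 : ℝ) 1, φ u ≤ φ (1 / 2) * ENNReal.ofReal (1 / 2) := by
    refine (setLIntegral_mono' measurableSet_Ioc fun u hu ↦ hφ hu.1.le).trans_eq ?_
    rw [setLIntegral_const, Real.volume_Ioc]
    norm_num
  have hleft : φ (1 / 2) * ENNReal.ofReal (1 / 2) ≤ ∫⁻ u in Ioc (0 : ℝ) (1 / 2), φ u := by
    refine Eq.trans_le ?_ (setLIntegral_mono' measurableSet_Ioc fun u hu ↦ hφ hu.2)
    rw [setLIntegral_const, Real.volume_Ioc]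
    norm_num
  rw [← Ioc_union_Ioc_eq_Ioc one_half_pos.le one_half_lt_one.le, two_mul]
  exact (lintegral_union_le _ _ _).trans (by gcongr 1; exact hright.trans hleft)

lemma lintegral_mul_min_le (hα : Antitone α) (hα0 : 1 / 2 ≤ α 0) (hQ : Antitone Q) :
    ∫⁻ u in Ioc (0 : ℝ) 1, Q u * min x (Q u) ≤
      2 * ∫⁻ u in Ioc (0 : ℝ) 1, Q u * min x (seqInverse α u * Q u) := by
  refine (lintegral_Ioc_one_le_of_antitone fun u v huv ↦
    mul_le_mul' (hQ huv) (min_le_min le_rfl (hQ huv))).trans ?_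
  gcongr 2 * ?_
  rw [← restrict_Ioo_eq_restrict_Ioc]
  refine (setLIntegral_mono' measurableSet_Ioo fun u hu ↦ ?_).trans
    (lintegral_mono_set (Ioo_subset_Ioc_self.trans (Ioc_subset_Ioc_right (by norm_num))))
  gcongr
  exact le_mul_of_one_le_left' (one_le_seqInverse hα (hu.2.trans_le hα0))

/-- Below `u₀` the two integrands add up to `x * Q u`, above `u₀` both vanish. -/
lemma mul_lintegral_tsub_add_lintegral_min_le (hQ : Antitone Q) {a u₀ : ℝ} {M : ℝ≥0}
    (hu₀ : u₀ ≤ 1) (hbelow : ∀ u, 0 ≤ u → u < u₀ → x ≤ seqInverse α u * Q u) (hM : Q u₀ = M)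
    (ha : a ≤ u₀ ∨ M = 0) :
    x * (∫⁻ u in Ioc (0 : ℝ) 1, (Q u - M)) + ∫⁻ u in Ioo 0 a, x * min (Q u) M ≤
      ∫⁻ u in Ioc (0 : ℝ) 1, Q u * min x (seqInverse α u * Q u) := by
  have hQm := hQ.measurable
  have hmin : ∫⁻ u in Ioo 0 a, x * min (Q u) M ≤ ∫⁻ u in Ioo 0 u₀, x * min (Q u) M := by
    rcases ha with ha | rfl
    · exact lintegral_mono_set (Ioo_subset_Ioo_right ha)
    · simp
  have htsub : ∫⁻ u in Ioc (0 : ℝ) 1, (Q u - M) ≤ ∫⁻ u in Ioo 0 u₀, (Q u - M) := by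
    rw [← lintegral_indicator measurableSet_Ioc, ← lintegral_indicator measurableSet_Ioo]
    refine lintegral_mono (indicator_le' (fun u hu ↦ ?_) fun _ _ ↦ zero_le)
    rcases lt_or_ge u u₀ with h | h
    · rw [indicator_of_mem (show u ∈ Ioo 0 u₀ from ⟨hu.1, h⟩)]
    · simp [tsub_eq_zero_of_le (hM ▸ hQ h)]
  calc x * (∫⁻ u in Ioc (0 : ℝ) 1, (Q u - M)) + ∫⁻ u in Ioo 0 a, x * min (Q u) M
      ≤ x * (∫⁻ u in Ioo 0 u₀, (Q u - M)) + ∫⁻ u in Ioo 0 u₀, x * min (Q u) M := by gcongr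
    _ = ∫⁻ u in Ioo 0 u₀, Q u * x := by
      rw [← lintegral_const_mul _ (hQm.sub_const _),
        ← lintegral_add_left ((hQm.sub_const _).const_mul _)]
      simp_rw [← mul_add, tsub_add_min, mul_comm x]
    _ ≤ ∫⁻ u in Ioo 0 u₀, Q u * min x (seqInverse α u * Q u) :=
      setLIntegral_mono' measurableSet_Ioo fun u hu ↦ by
        rw [min_eq_left (hbelow u hu.1.le hu.2)]
    _ ≤ _ := lintegral_mono_set (Ioo_subset_Ioc_self.trans (Ioc_subset_Ioc_right hu₀))

lemma sum_lintegral_min_mul_min_le (hα : Antitone α) (hα1 : α 0 ≤ 1) (hQ : Measurable Q)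
    {M : ℝ≥0∞} {q : ℕ} (hqM : q * M ≤ x) :
    ∑ k ∈ Finset.Ico 1 (q + 1), ∫⁻ u in Ioo 0 (α k), min (Q u) M * min (Q u) M ≤
      ∫⁻ u in Ioc (0 : ℝ) 1, Q u * min x (seqInverse α u * Q u) := by
  have hsq : Measurable fun u ↦ min (Q u) M * min (Q u) M :=
    (hQ.min measurable_const).mul (hQ.min measurable_const)
  calc ∑ k ∈ Finset.Ico 1 (q + 1), ∫⁻ u in Ioo 0 (α k), min (Q u) M * min (Q u) M
      ≤ ∑ k ∈ Finset.Ico 1 (q + 1), ∫⁻ u in Ioc (0 : ℝ) 1,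
          (Iio (α k)).indicator (fun u ↦ min (Q u) M * min (Q u) M) u :=
        Finset.sum_le_sum fun k _ ↦ by
          rw [setLIntegral_indicator measurableSet_Iio]
          exact lintegral_mono_set fun u hu ↦
            ⟨hu.2, hu.1, hu.2.le.trans ((hα k.zero_le).trans hα1)⟩
    _ = ∫⁻ u in Ioc (0 : ℝ) 1, ((Finset.Ico 1 (q + 1)).filter fun k ↦ u < α k).card *
          (min (Q u) M * min (Q u) M) := by
      rw [← lintegral_finsetSum _ fun k _ ↦ hsq.indicator measurableSet_Iio]
      simp only [indicator_apply, mem_Iio, ← Finset.sum_filter, Finset.sum_const, nsmul_eq_mul]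
    _ ≤ _ := lintegral_mono fun u ↦ by
      have hcard_le : ((Finset.Ico 1 (q + 1)).filter fun k ↦ u < α k).card ≤ q := by
        simpa using Finset.card_filter_le (Finset.Ico 1 (q + 1)) fun k ↦ u < α k
      rw [mul_left_comm]
      refine mul_le_mul' (min_le_left _ _) (le_min ?_ ?_)
      · exact (mul_le_mul' (Nat.cast_le.2 hcard_le) (min_le_right _ _)).trans hqM
      · exact mul_le_mul' (card_filter_lt_le_seqInverse hα q u) (min_le_left _ _)

lemma exists_truncation_error_le (hα : Antitone α) (hα0 : α 0 = 1 / 2) (hQ : Antitone Q)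
    (hQ_lsc : LowerSemicontinuous Q) (hQ_fin : Q (1 / 2) ≠ ∞) (hx : x ≠ ∞) :
    ∃ (M : ℝ≥0) (q : ℕ), 1 ≤ q ∧
      x * (∫⁻ u in Ioc (0 : ℝ) 1, (Q u - M)) +
        (2 * (∫⁻ u in Ioc (0 : ℝ) 1, Q u * min x (Q u)) +
          x * (∫⁻ u in Ioc (0 : ℝ) 1, (Q u - M)) +
          (4 * (∑ k ∈ Finset.Ico 1 q, ∫⁻ u in Ioo 0 (α k), min (Q u) M * min (Q u) M) +
            4 * ∫⁻ u in Ioo 0 (α q), x * min (Q u) M)) ≤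
      12 * ∫⁻ u in Ioc (0 : ℝ) 1, Q u * min x (seqInverse α u * Q u) := by
  obtain ⟨u₀, M, q, hu₀, hbelow, hM, hqM, hαq⟩ :=
    exists_truncation_level hα hα0 hQ_lsc hQ_fin hx
  refine ⟨M, q + 1, q.succ_pos, ?_⟩
  set J := ∫⁻ u in Ioc (0 : ℝ) 1, Q u * min x (seqInverse α u * Q u)
  set B := ∫⁻ u in Ioc (0 : ℝ) 1, Q u * min x (Q u)
  set T := x * ∫⁻ u in Ioc (0 : ℝ) 1, (Q u - M)
  set S := ∑ k ∈ Finset.Ico 1 (q + 1), ∫⁻ u in Ioo 0 (α k), min (Q u) M * min (Q u) M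
  set V := ∫⁻ u in Ioo 0 (α (q + 1)), x * min (Q u) M
  have hB : B ≤ 2 * J := lintegral_mul_min_le hα hα0.ge hQ
  have hS : S ≤ J := sum_lintegral_min_mul_min_le hα (by linarith) hQ.measurable hqM
  have hTV : T + V ≤ J := mul_lintegral_tsub_add_lintegral_min_le hQ (by linarith) hbelow hM
    (hαq.imp_left (hα q.le_succ).trans)
  calc T + (2 * B + T + (4 * S + 4 * V)) ≤ T + (2 * B + T + (4 * S + 4 * V)) + 2 * T := le_self_add
    _ = 2 * B + 4 * S + 4 * (T + V) := by ring
    _ ≤ 2 * (2 * J) + 4 * J + 4 * J := by gcongr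
    _ = 12 * J := by ring

end TruncationLevel

section MixingRate

/-- `α` bounds the dependence of `Y` on the past `ℱ`: the mixing coefficient between `ℱ i` and the
single variable `Y (i + m)` is at most `α m`. The normalization `α 0 = 1 / 2` is the convention for
Rosenblatt coefficients. -/
structure IsMixingRate {Ω : Type*} {mΩ : MeasurableSpace Ω} (P : Measure Ω)
    (ℱ : Filtration ℕ mΩ) (Y : ℕ → Ω → ℝ) (α : ℕ → ℝ) : Prop where
  antitone : Antitone α
  zero : α 0 = 1 / 2
  alphaMixing_le : ∀ i m, 1 ≤ m →
    alphaMixing P (ℱ i) (MeasurableSpace.comap (Y (i + m)) inferInstance) ≤ α m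

variable {Ω : Type*} {mΩ : MeasurableSpace Ω} {P : Measure Ω} [IsProbabilityMeasure P]
  {ℱ : Filtration ℕ mΩ} {Y W : ℕ → Ω → ℝ} {α : ℕ → ℝ}

lemma IsMixingRate.comp (h : IsMixingRate P ℱ Y α) {φ : ℝ → ℝ} (hφ : Measurable φ) :
    IsMixingRate P ℱ (fun j ↦ φ ∘ Y j) α where
  antitone := h.antitone
  zero := h.zero
  alphaMixing_le i m hm := by
    refine (alphaMixing_mono le_rfl ?_).trans (h.alphaMixing_le i m hm)
    rw [← MeasurableSpace.comap_comp]
    exact MeasurableSpace.comap_mono hφ.comap_le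

variable {x : ℝ} {F : ℝ → ℝ≥0∞}

lemma measurable_sum_of_adapted (hW : Adapted ℱ W) (n : ℕ) :
    Measurable[ℱ n] fun ω ↦ ∑ j ∈ Finset.Icc 1 n, W j ω :=
  Finset.measurable_fun_sum _ fun j hj ↦
    (hW j).mono (ℱ.mono (Finset.mem_Icc.1 hj).2) le_rfl

lemma IsMixingRate.enorm_covariance_le (hα : IsMixingRate P ℱ W α) (hW : Adapted ℱ W)
    {i m : ℕ} (hm : 1 ≤ m) {X : Ω → ℝ} (hX : Measurable[ℱ i] X)
    (hX2 : MemLp X 2 P) (hW2 : MemLp (W (i + m)) 2 P) {G : ℝ → ℝ≥0∞} (hF : Measurable F)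
    (hG : Measurable G) (hXF : IsTailEnvelope P (fun ω ↦ ‖X ω‖ₑ) F)
    (hWG : IsTailEnvelope P (fun ω ↦ ‖W (i + m) ω‖ₑ) G) :
    ‖cov[X, W (i + m); P]‖ₑ ≤ 4 * ∫⁻ u in Ioo 0 (α m), F u * G u := by
  have hcomap : MeasurableSpace.comap (W (i + m)) inferInstance ≤ mΩ :=
    ((hW (i + m)).mono (ℱ.le _) le_rfl).comap_le
  refine (_root_.enorm_covariance_le (ℱ.le i) hcomap hX (comap_measurable _) hX2 hW2 hF hG hXF
    hWG).trans ?_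
  gcongr
  exact hα.alphaMixing_le i m hm

lemma enorm_covariance_clip_sum_sub_clip_sum_le (hα : IsMixingRate P ℱ W α) (hW : Adapted ℱ W)
    (hx : 0 ≤ x) (hW2 : ∀ j, MemLp (W j) 2 P) (hF : Measurable F)
    (hWF : ∀ j, IsTailEnvelope P (fun ω ↦ ‖W j ω‖ₑ) F) {q : ℕ} (hq : 1 ≤ q) (m : ℕ) :
    ‖cov[fun ω ↦ clip x (∑ j ∈ Finset.Icc 1 (m + 1), W j ω) -
        clip x (∑ j ∈ Finset.Icc 1 m, W j ω), W (m + 1 + q); P]‖ₑ ≤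
      4 * ∫⁻ u in Ioo 0 (α q), F u * F u := by
  have hclip (n : ℕ) : Measurable[ℱ n] fun ω ↦ clip x (∑ j ∈ Finset.Icc 1 n, W j ω) :=
    (measurable_clip x).comp (measurable_sum_of_adapted hW n)
  have hclip2 (n : ℕ) : MemLp (fun ω ↦ clip x (∑ j ∈ Finset.Icc 1 n, W j ω)) 2 P :=
    memLp_clip_comp hx ((measurable_sum_of_adapted hW n).mono (ℱ.le n) le_rfl).aemeasurable 2
  refine hα.enorm_covariance_le hW hq
    ((hclip (m + 1)).fun_sub ((hclip m).mono (ℱ.mono m.le_succ) le_rfl))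
    ((hclip2 (m + 1)).sub (hclip2 m)) (hW2 _) hF hF ((hWF (m + 1)).mono_left fun ω ↦ ?_) (hWF _)
  have hlip := abs_clip_sub_clip_le x (∑ j ∈ Finset.Icc 1 (m + 1), W j ω)
    (∑ j ∈ Finset.Icc 1 m, W j ω)
  rw [Finset.sum_Icc_succ_top (by lia), add_sub_cancel_left] at hlip
  rw [Finset.sum_Icc_succ_top (by lia)]
  exact enorm_le_iff_norm_le.2 hlip

lemma enorm_covariance_clip_sum_le_add (hα : IsMixingRate P ℱ W α) (hW : Adapted ℱ W)
    (hx : 0 ≤ x) (hW2 : ∀ j, MemLp (W j) 2 P) (hF : Measurable F)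
    (hWF : ∀ j, IsTailEnvelope P (fun ω ↦ ‖W j ω‖ₑ) F) (n : ℕ) {q : ℕ} (hq : 1 ≤ q) :
    ‖cov[fun ω ↦ clip x (∑ j ∈ Finset.Icc 1 n, W j ω), W (n + 1); P]‖ₑ ≤
      4 * (∑ k ∈ Finset.Ico 1 q, ∫⁻ u in Ioo 0 (α k), F u * F u) +
        ‖cov[fun ω ↦ clip x (∑ j ∈ Finset.Icc 1 (n + 1 - q), W j ω), W (n + 1); P]‖ₑ := by
  have hclip2 (n : ℕ) : MemLp (fun ω ↦ clip x (∑ j ∈ Finset.Icc 1 n, W j ω)) 2 P :=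
    memLp_clip_comp hx ((measurable_sum_of_adapted hW n).mono (ℱ.le n) le_rfl).aemeasurable 2
  induction q, hq using Nat.le_induction with
  | base => simp
  | succ q hq ih =>
    refine ih.trans ?_
    rw [Finset.sum_Ico_succ_top hq, mul_add, add_assoc]
    gcongr
    rcases lt_or_ge n q with hnq | hnq
    · rw [show n + 1 - q = 0 by lia, show n + 1 - (q + 1) = 0 by lia]
      exact le_add_self
    · obtain ⟨m, rfl⟩ := Nat.exists_eq_add_of_le' hnq
      rw [show m + q + 1 - q = m + 1 by lia, show m + q + 1 - (q + 1) = m by lia]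
      have hinc := enorm_covariance_clip_sum_sub_clip_sum_le hα hW hx hW2 hF hWF hq m
      rw [covariance_fun_sub_left (hclip2 (m + 1)) (hclip2 m) (hW2 _),
        show m + 1 + q = m + q + 1 by ring] at hinc
      refine le_trans ?_ (add_le_add_left hinc _)
      refine le_trans (le_of_eq ?_) (enorm_add_le _ _)
      rw [sub_add_cancel]

lemma enorm_covariance_clip_sum_le (hα : IsMixingRate P ℱ W α) (hW : Adapted ℱ W)
    (hx : 0 ≤ x) (hW2 : ∀ j, MemLp (W j) 2 P) (hF : Measurable F)
    (hWF : ∀ j, IsTailEnvelope P (fun ω ↦ ‖W j ω‖ₑ) F) (n : ℕ) {q : ℕ} (hq : 1 ≤ q) :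
    ‖cov[fun ω ↦ clip x (∑ j ∈ Finset.Icc 1 n, W j ω), W (n + 1); P]‖ₑ ≤
      4 * (∑ k ∈ Finset.Ico 1 q, ∫⁻ u in Ioo 0 (α k), F u * F u) +
        4 * ∫⁻ u in Ioo 0 (α q), ENNReal.ofReal x * F u := by
  refine (enorm_covariance_clip_sum_le_add hα hW hx hW2 hF hWF n hq).trans ?_
  gcongr
  rcases lt_or_ge n q with hnq | hnq
  · have hcov : cov[fun ω ↦ clip x (∑ j ∈ Finset.Icc 1 (n + 1 - q), W j ω), W (n + 1); P] = 0 := by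
      rw [show n + 1 - q = 0 by lia]
      exact covariance_const_left (clip x 0)
    simp [hcov]
  · obtain ⟨m, rfl⟩ := Nat.exists_eq_add_of_le' hnq
    rw [show m + q + 1 - q = m + 1 by lia, show m + q + 1 = m + 1 + q by ring]
    have hS := measurable_sum_of_adapted hW (m + 1)
    refine hα.enorm_covariance_le hW hq ((measurable_clip x).comp hS)
      (memLp_clip_comp hx (hS.mono (ℱ.le _) le_rfl).aemeasurable 2) (hW2 _) measurable_const hF
      (isTailEnvelope_const fun ω ↦ ?_) (hWF _)
    rw [Real.enorm_eq_ofReal_abs]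
    exact ENNReal.ofReal_le_ofReal (abs_clip_le hx _)

end MixingRate

section HuberMoment

variable {Ω : Type*} {mΩ : MeasurableSpace Ω} {P : Measure Ω} {x : ℝ} {S W : Ω → ℝ}

lemma integrable_huber_comp (hx : 0 ≤ x) (hS : Integrable S P) :
    Integrable (fun ω ↦ huber x (S ω)) P :=
  (hS.abs.const_mul x).mono' ((measurable_huber x).comp_aemeasurable
    hS.aemeasurable).aestronglyMeasurable (.of_forall fun ω ↦ by
      rw [Real.norm_of_nonneg (huber_nonneg hx _)]
      exact huber_le hx _)

lemma integrable_abs_mul_min_abs (hx : 0 ≤ x) (hW : Integrable W P) :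
    Integrable (fun ω ↦ |W ω| * min x |W ω|) P :=
  (hW.abs.mul_const x).mono' (by have := hW.aemeasurable; fun_prop) (.of_forall fun ω ↦ by
    rw [Real.norm_of_nonneg (mul_nonneg (abs_nonneg _) (le_min hx (abs_nonneg _)))]
    gcongr
    exact min_le_left _ _)

variable [IsProbabilityMeasure P]

lemma integral_clip_mul_le (hx : 0 ≤ x) (hS : AEMeasurable S P) (hW : MemLp W 2 P) :
    ∫ ω, W ω * clip x (S ω) ∂P ≤ x * |∫ ω, W ω ∂P| + |cov[fun ω ↦ clip x (S ω), W; P]| := by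
  have hclip := memLp_clip_comp hx hS 2
  have hbound : |∫ ω, clip x (S ω) ∂P| ≤ x := by
    simpa using norm_integral_le_of_norm_le_const (μ := P) (f := fun ω ↦ clip x (S ω))
      (.of_forall fun ω ↦ abs_clip_le hx (S ω))
  have hcov : ∫ ω, W ω * clip x (S ω) ∂P =
      (∫ ω, clip x (S ω) ∂P) * ∫ ω, W ω ∂P + cov[fun ω ↦ clip x (S ω), W; P] := by
    rw [covariance_eq_sub hclip hW]
    simp only [Pi.mul_apply, mul_comm (W _)]
    ring
  rw [hcov]
  refine add_le_add ((le_abs_self _).trans ?_) (le_abs_self _)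
  rw [abs_mul]
  gcongr

lemma integral_huber_add_le (hx : 0 ≤ x) (hS : Integrable S P) (hW : MemLp W 2 P) :
    ∫ ω, huber x (S ω + W ω) ∂P ≤ ∫ ω, huber x (S ω) ∂P +
      (2 * (∫ ω, |W ω| * min x |W ω| ∂P) + x * |∫ ω, W ω ∂P| +
        |cov[fun ω ↦ clip x (S ω), W; P]|) := by
  have hWint : Integrable W P := hW.integrable one_le_two
  have hhuber := integrable_huber_comp hx hS
  have hprod : Integrable (fun ω ↦ W ω * clip x (S ω)) P :=
    hW.integrable_mul (memLp_clip_comp hx hS.aemeasurable 2)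
  have hsum : Integrable (fun ω ↦ huber x (S ω) + W ω * clip x (S ω)) P := hhuber.add hprod
  have hmin := (integrable_abs_mul_min_abs hx hWint).const_mul 2
  calc ∫ ω, huber x (S ω + W ω) ∂P
      ≤ ∫ ω, (huber x (S ω) + W ω * clip x (S ω) + 2 * (|W ω| * min x |W ω|)) ∂P :=
        integral_mono (integrable_huber_comp hx (hS.add hWint)) (hsum.add hmin)
          fun ω ↦ huber_add_le hx (S ω) (W ω)
    _ = ∫ ω, huber x (S ω) ∂P + ∫ ω, W ω * clip x (S ω) ∂P +
          2 * ∫ ω, |W ω| * min x |W ω| ∂P := by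
      rw [integral_add hsum hmin, integral_add hhuber hprod, integral_const_mul]
    _ ≤ _ := by linarith [integral_clip_mul_le hx hS.aemeasurable hW]

lemma lintegral_huber_add_le (hx : 0 ≤ x) (hS : Integrable S P) (hW : MemLp W 2 P) :
    ∫⁻ ω, ENNReal.ofReal (huber x (S ω + W ω)) ∂P ≤ ∫⁻ ω, ENNReal.ofReal (huber x (S ω)) ∂P +
      (2 * (∫⁻ ω, ‖W ω‖ₑ * min (ENNReal.ofReal x) ‖W ω‖ₑ ∂P) + ENNReal.ofReal x * ‖∫ ω, W ω ∂P‖ₑ +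
        ‖cov[fun ω ↦ clip x (S ω), W; P]‖ₑ) := by
  have hWint : Integrable W P := hW.integrable one_le_two
  have hSW : Integrable (fun ω ↦ S ω + W ω) P := hS.add hWint
  have hmin0 (ω : Ω) : 0 ≤ |W ω| * min x |W ω| := mul_nonneg (abs_nonneg _)
    (le_min hx (abs_nonneg _))
  have hhuber0 (s : ℝ) : 0 ≤ huber x s := huber_nonneg hx s
  have hmin : ENNReal.ofReal (∫ ω, |W ω| * min x |W ω| ∂P) =
      ∫⁻ ω, ‖W ω‖ₑ * min (ENNReal.ofReal x) ‖W ω‖ₑ ∂P := by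
    rw [ofReal_integral_eq_lintegral_ofReal (integrable_abs_mul_min_abs hx hWint)
      (.of_forall hmin0)]
    simp only [ENNReal.ofReal_mul (abs_nonneg _), ENNReal.ofReal_min, Real.enorm_eq_ofReal_abs]
  have : 0 ≤ ∫ ω, |W ω| * min x |W ω| ∂P := integral_nonneg hmin0
  rw [← hmin, Real.enorm_eq_ofReal_abs, Real.enorm_eq_ofReal_abs,
    ← ofReal_integral_eq_lintegral_ofReal (integrable_huber_comp hx hS)
      (.of_forall fun _ ↦ hhuber0 _),
    ← ofReal_integral_eq_lintegral_ofReal (integrable_huber_comp hx hSW)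
      (.of_forall fun _ ↦ hhuber0 _),
    ← ENNReal.ofReal_mul hx, ← ENNReal.ofReal_ofNat 2, ← ENNReal.ofReal_mul zero_le_two,
    ← ENNReal.ofReal_add (by positivity) (by positivity),
    ← ENNReal.ofReal_add (by positivity) (by positivity),
    ← ENNReal.ofReal_add (integral_nonneg fun _ ↦ hhuber0 _) (by positivity)]
  exact ENNReal.ofReal_le_ofReal (integral_huber_add_le hx hS hW)

lemma lintegral_huber_sum_le_of_envelope {ℱ : Filtration ℕ mΩ} {W : ℕ → Ω → ℝ} {α : ℕ → ℝ}
    {F : ℝ → ℝ≥0∞} (hα : IsMixingRate P ℱ W α) (hW : Adapted ℱ W) (hx : 0 ≤ x)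
    (hW2 : ∀ j, MemLp (W j) 2 P) (hF : Measurable F)
    (hWF : ∀ j, IsTailEnvelope P (fun ω ↦ ‖W j ω‖ₑ) F) {β τ : ℝ≥0∞}
    (hβ : ∀ j, ∫⁻ ω, ‖W j ω‖ₑ * min (ENNReal.ofReal x) ‖W j ω‖ₑ ∂P ≤ β)
    (hτ : ∀ j, ‖∫ ω, W j ω ∂P‖ₑ ≤ τ) {q : ℕ} (hq : 1 ≤ q) (n : ℕ) :
    ∫⁻ ω, ENNReal.ofReal (huber x (∑ j ∈ Finset.Icc 1 n, W j ω)) ∂P ≤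
      n * (2 * β + ENNReal.ofReal x * τ +
        (4 * (∑ k ∈ Finset.Ico 1 q, ∫⁻ u in Ioo 0 (α k), F u * F u) +
          4 * ∫⁻ u in Ioo 0 (α q), ENNReal.ofReal x * F u)) := by
  induction n with
  | zero =>
    have h0 : huber x 0 ≤ 0 := by simpa using huber_le hx 0
    simp [ENNReal.ofReal_of_nonpos h0]
  | succ n ih =>
    have hS : Integrable (fun ω ↦ ∑ j ∈ Finset.Icc 1 n, W j ω) P :=
      integrable_finsetSum _ fun j _ ↦ (hW2 j).integrable one_le_two
    simp only [Finset.sum_Icc_succ_top (Nat.le_add_left 1 n)]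
    refine (lintegral_huber_add_le hx hS (hW2 (n + 1))).trans ?_
    rw [Nat.cast_succ, add_one_mul]
    gcongr
    · exact hβ _
    · exact hτ _
    · exact enorm_covariance_clip_sum_le hα hW hx hW2 hF hWF n hq

end HuberMoment

section MomentInequality

variable {Ω : Type*} {mΩ : MeasurableSpace Ω} {P : Measure Ω} {x p : ℝ}

lemma ofReal_huber_sum_le_add (hx : 0 ≤ x) (y z : ℕ → ℝ) (n : ℕ) :
    ENNReal.ofReal (huber x (∑ j ∈ Finset.Icc 1 n, y j)) ≤
      ENNReal.ofReal (huber x (∑ j ∈ Finset.Icc 1 n, z j)) +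
        ∑ j ∈ Finset.Icc 1 n, ENNReal.ofReal x * ‖y j - z j‖ₑ := by
  rw [← Finset.mul_sum]
  calc ENNReal.ofReal (huber x (∑ j ∈ Finset.Icc 1 n, y j))
      ≤ ENNReal.ofReal (huber x (∑ j ∈ Finset.Icc 1 n, z j) +
          x * |∑ j ∈ Finset.Icc 1 n, y j - ∑ j ∈ Finset.Icc 1 n, z j|) :=
        ENNReal.ofReal_le_ofReal (huber_le_huber_add_mul_abs hx _ _)
    _ = ENNReal.ofReal (huber x (∑ j ∈ Finset.Icc 1 n, z j)) +
          ENNReal.ofReal x * ‖∑ j ∈ Finset.Icc 1 n, (y j - z j)‖ₑ := by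
        rw [ENNReal.ofReal_add (huber_nonneg hx _) (by positivity), ENNReal.ofReal_mul hx,
          ← Real.enorm_eq_ofReal_abs, Finset.sum_sub_distrib]
    _ ≤ _ := by
        gcongr
        exact enorm_sum_le _ _

lemma lintegral_huber_sum_le_add (hx : 0 ≤ x) {Y W : ℕ → Ω → ℝ} (hY : ∀ j, Measurable (Y j))
    (hW : ∀ j, Measurable (W j)) {τ : ℝ≥0∞} (hτ : ∀ j, ∫⁻ ω, ‖Y j ω - W j ω‖ₑ ∂P ≤ τ) (n : ℕ) :
    ∫⁻ ω, ENNReal.ofReal (huber x (∑ j ∈ Finset.Icc 1 n, Y j ω)) ∂P ≤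
      ∫⁻ ω, ENNReal.ofReal (huber x (∑ j ∈ Finset.Icc 1 n, W j ω)) ∂P +
        n * (ENNReal.ofReal x * τ) := by
  have hdiff (j : ℕ) : Measurable fun ω ↦ ‖Y j ω - W j ω‖ₑ := ((hY j).sub (hW j)).enorm
  have hhuber := ((measurable_huber x).comp
    (Finset.measurable_fun_sum (Finset.Icc 1 n) fun j _ ↦ hW j)).ennreal_ofReal
  refine (lintegral_mono fun ω ↦
    ofReal_huber_sum_le_add hx (fun j ↦ Y j ω) (fun j ↦ W j ω) n).trans ?_
  refine (lintegral_add_left hhuber _).trans_le ?_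
  rw [lintegral_finsetSum _ fun j _ ↦ (hdiff j).const_mul _]
  refine add_le_add_right ((Finset.sum_le_card_nsmul (Finset.Icc 1 n) _ (ENNReal.ofReal x * τ)
    fun j _ ↦ ?_).trans_eq (by rw [Nat.card_Icc, add_tsub_cancel_right, nsmul_eq_mul])) _
  rw [lintegral_const_mul _ (hdiff j)]
  gcongr
  exact hτ j

lemma ne_top_of_antitone_of_lintegral_ne_top {Q : ℝ → ℝ≥0∞} (hQ : Antitone Q)
    (hQ_int : ∫⁻ u in Ioc (0 : ℝ) 1, Q u ≠ ∞) {a : ℝ} (ha : 0 < a) (ha1 : a ≤ 1) : Q a ≠ ∞ := by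
  contrapose! hQ_int
  have hinf : ∀ u ∈ Ioc 0 a, ∞ ≤ Q u := fun u hu ↦ hQ_int ▸ hQ hu.2
  refine top_le_iff.1 (le_trans ?_ (lintegral_mono_set (Ioc_subset_Ioc_right ha1)))
  refine le_trans (le_of_eq ?_) (setLIntegral_mono' measurableSet_Ioc hinf)
  rw [setLIntegral_const, Real.volume_Ioc, sub_zero, ENNReal.top_mul (ENNReal.ofReal_pos.2 ha).ne']

lemma enorm_integral_clip_le [IsFiniteMeasure P] {Z : Ω → ℝ} (hZ : Integrable Z P)
    (hZ0 : ∫ ω, Z ω ∂P = 0) (M : ℝ≥0) :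
    ‖∫ ω, clip M (Z ω) ∂P‖ₑ ≤ ∫⁻ ω, ‖Z ω - clip M (Z ω)‖ₑ ∂P := by
  have hclip : Integrable (fun ω ↦ clip M (Z ω)) P :=
    (memLp_clip_comp M.coe_nonneg hZ.aemeasurable 1).integrable le_rfl
  have hsub : ∫ ω, (Z ω - clip M (Z ω)) ∂P = -∫ ω, clip M (Z ω) ∂P := by
    rw [integral_sub hZ hclip, hZ0, zero_sub]
  rw [← enorm_neg, ← hsub]
  exact enorm_integral_le_lintegral_enorm _

lemma lintegral_enorm_rpow_le_lintegral_huber [SFinite P] (hp : 1 < p) {S : Ω → ℝ}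
    (hS : Measurable S) :
    ∫⁻ ω, ‖S ω‖ₑ ^ p ∂P ≤ ENNReal.ofReal (2 * (p - 1)) * ∫⁻ x in Ioi (0 : ℝ),
      ENNReal.ofReal (x ^ (p - 3)) * ∫⁻ ω, ENNReal.ofReal (huber x (S ω)) ∂P := by
  have hjoint : Measurable fun z : Ω × ℝ ↦
      ENNReal.ofReal (z.2 ^ (p - 3)) * ENNReal.ofReal (huber z.2 (S z.1)) :=
    (by fun_prop : Measurable fun z : Ω × ℝ ↦ ENNReal.ofReal (z.2 ^ (p - 3))).mul
      (continuous_huber.measurable.comp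
        (measurable_snd.prodMk (hS.comp measurable_fst))).ennreal_ofReal
  refine (lintegral_mono fun ω ↦ enorm_rpow_le_lintegral_huber hp (S ω)).trans_eq ?_
  rw [lintegral_const_mul _ hjoint.lintegral_prod_right',
    lintegral_lintegral_swap hjoint.aemeasurable]
  congr 1
  exact lintegral_congr fun x ↦
    lintegral_const_mul (ENNReal.ofReal (x ^ (p - 3))) ((measurable_huber x).comp hS).ennreal_ofReal

lemma lintegral_rpow_mul_lintegral_mul_min_le (hp1 : 1 < p) (hp2 : p < 2) {E : Type*}
    [MeasurableSpace E] (μ : Measure E) [SFinite μ] {Q R : E → ℝ≥0∞} (hQ : Measurable Q)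
    (hR : Measurable R) :
    ∫⁻ x in Ioi (0 : ℝ), ENNReal.ofReal (x ^ (p - 3)) *
        ∫⁻ u, Q u * min (ENNReal.ofReal x) (R u * Q u) ∂μ ≤
      ENNReal.ofReal (1 / ((p - 1) * (2 - p))) * ∫⁻ u, R u ^ (p - 1) * Q u ^ p ∂μ := by
  have hp1' : 0 ≤ p - 1 := (sub_pos.2 hp1).le
  have hpow (u : E) : Q u * (R u * Q u) ^ (p - 1) = R u ^ (p - 1) * Q u ^ p := by
    have h := ENNReal.rpow_add_of_nonneg (x := Q u) 1 (p - 1) zero_le_one hp1'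
    rw [add_sub_cancel, ENNReal.rpow_one] at h
    rw [ENNReal.mul_rpow_of_nonneg _ _ hp1', h, mul_left_comm]
  have hjoint : Measurable fun z : ℝ × E ↦ ENNReal.ofReal (z.1 ^ (p - 3)) *
      (Q z.2 * min (ENNReal.ofReal z.1) (R z.2 * Q z.2)) := by fun_prop
  calc _ = ∫⁻ x in Ioi (0 : ℝ), ∫⁻ u, ENNReal.ofReal (x ^ (p - 3)) *
          (Q u * min (ENNReal.ofReal x) (R u * Q u)) ∂μ :=
        lintegral_congr fun x ↦ (lintegral_const_mul _ (by fun_prop)).symm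
    _ = ∫⁻ u, Q u * (∫⁻ x in Ioi (0 : ℝ), ENNReal.ofReal (x ^ (p - 3)) *
          min (ENNReal.ofReal x) (R u * Q u)) ∂μ := by
        rw [lintegral_lintegral_swap hjoint.aemeasurable]
        simp only [mul_left_comm _ (Q _)]
        exact lintegral_congr fun u ↦ lintegral_const_mul _ (by fun_prop)
    _ ≤ ∫⁻ u, Q u * (ENNReal.ofReal (1 / ((p - 1) * (2 - p))) *
          (R u * Q u) ^ (p - 1)) ∂μ := by
        gcongr with u
        exact lintegral_rpow_mul_min_le hp1 hp2 _
    _ = _ := by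
        simp only [mul_left_comm (Q _), hpow]
        exact lintegral_const_mul _ (by fun_prop)

variable [IsProbabilityMeasure P] {ℱ : Filtration ℕ mΩ} {Y : ℕ → Ω → ℝ} {α : ℕ → ℝ} {Q : ℝ → ℝ≥0∞}

lemma lintegral_huber_sum_le (hα : IsMixingRate P ℱ Y α) (hY : Adapted ℱ Y)
    (hY_int : ∀ j, Integrable (Y j) P) (hY0 : ∀ j, ∫ ω, Y j ω ∂P = 0) (hQ : Antitone Q)
    (hQ_lsc : LowerSemicontinuous Q) (hQ_int : ∫⁻ u in Ioc (0 : ℝ) 1, Q u ≠ ∞)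
    (hYQ : ∀ j, IsTailEnvelope P (fun ω ↦ ‖Y j ω‖ₑ) Q) (hx : 0 ≤ x) (n : ℕ) :
    ∫⁻ ω, ENNReal.ofReal (huber x (∑ j ∈ Finset.Icc 1 n, Y j ω)) ∂P ≤
      12 * n * ∫⁻ u in Ioc (0 : ℝ) 1, Q u * min (ENNReal.ofReal x) (seqInverse α u * Q u) := by
  obtain ⟨M, q, hq, herror⟩ := exists_truncation_error_le hα.antitone hα.zero hQ hQ_lsc
    (ne_top_of_antitone_of_lintegral_ne_top hQ hQ_int one_half_pos (by norm_num))
    (ENNReal.ofReal_ne_top (r := x))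
  have hY_meas (j : ℕ) : Measurable (Y j) := (hY j).mono (ℱ.le j) le_rfl
  have hclip_meas (j : ℕ) : Measurable (clip M ∘ Y j) := (measurable_clip M).comp (hY_meas j)
  have hexcess (j : ℕ) :
      ∫⁻ ω, ‖Y j ω - clip M (Y j ω)‖ₑ ∂P ≤ ∫⁻ u in Ioc (0 : ℝ) 1, (Q u - M) := by
    simp only [enorm_sub_clip]
    exact ((hYQ j).comp_monotone fun _ _ h ↦ tsub_le_tsub_right h _).lintegral_le
      ((hY_meas j).enorm.sub_const _)
  have henv (j : ℕ) : IsTailEnvelope P (fun ω ↦ ‖clip M (Y j ω)‖ₑ) fun u ↦ min (Q u) M := by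
    simp only [enorm_clip]
    exact (hYQ j).comp_monotone fun _ _ h ↦ min_le_min_right _ h
  have hmin (j : ℕ) : ∫⁻ ω, ‖clip M (Y j ω)‖ₑ * min (ENNReal.ofReal x) ‖clip M (Y j ω)‖ₑ ∂P ≤
      ∫⁻ u in Ioc (0 : ℝ) 1, Q u * min (ENNReal.ofReal x) (Q u) := by
    have hle (ω : Ω) : ‖clip M (Y j ω)‖ₑ ≤ ‖Y j ω‖ₑ := (enorm_clip M _).trans_le (min_le_left _ _)
    have hmono : Monotone fun t ↦ t * min (ENNReal.ofReal x) t :=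
      fun _ _ h ↦ mul_le_mul' h (min_le_min_left _ h)
    exact (((hYQ j).mono_left hle).comp_monotone hmono).lintegral_le
      ((hclip_meas j).enorm.mul (measurable_const.min (hclip_meas j).enorm))
  have hclip_sum := lintegral_huber_sum_le_of_envelope (hα.comp (measurable_clip M))
    (fun j ↦ (measurable_clip M).comp (hY j)) hx
    (fun j ↦ memLp_clip_comp M.coe_nonneg (hY_meas j).aemeasurable 2)
    (hQ.measurable.min measurable_const) henv hmin
    (fun j ↦ (enorm_integral_clip_le (hY_int j) (hY0 j) M).trans (hexcess j)) hq n
  calc ∫⁻ ω, ENNReal.ofReal (huber x (∑ j ∈ Finset.Icc 1 n, Y j ω)) ∂P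
      ≤ _ := lintegral_huber_sum_le_add hx hY_meas hclip_meas hexcess n
    _ ≤ _ := by
      rw [mul_comm 12, mul_assoc]
      refine (add_le_add_left hclip_sum _).trans ?_
      rw [add_comm, ← mul_add]
      gcongr

lemma lintegral_enorm_sum_rpow_le (hα : IsMixingRate P ℱ Y α) (hY : Adapted ℱ Y)
    (hY_int : ∀ j, Integrable (Y j) P) (hY0 : ∀ j, ∫ ω, Y j ω ∂P = 0) (hQ : Antitone Q)
    (hQ_lsc : LowerSemicontinuous Q) (hQ_int : ∫⁻ u in Ioc (0 : ℝ) 1, Q u ≠ ∞)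
    (hYQ : ∀ j, IsTailEnvelope P (fun ω ↦ ‖Y j ω‖ₑ) Q) (hp1 : 1 < p) (hp2 : p < 2) (n : ℕ) :
    ∫⁻ ω, ‖∑ j ∈ Finset.Icc 1 n, Y j ω‖ₑ ^ p ∂P ≤
      ENNReal.ofReal (24 / (2 - p)) * n *
        ∫⁻ u in Ioc (0 : ℝ) 1, seqInverse α u ^ (p - 1) * Q u ^ p := by
  have hp1' := sub_pos.2 hp1
  have hp2' := sub_pos.2 hp2
  have hconst : ENNReal.ofReal (24 / (2 - p)) =
      ENNReal.ofReal (2 * (p - 1)) * (12 * ENNReal.ofReal (1 / ((p - 1) * (2 - p)))) := by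
    rw [← ENNReal.ofReal_ofNat 12, ← ENNReal.ofReal_mul (by norm_num),
      ← ENNReal.ofReal_mul (by positivity)]
    congr 1
    field_simp
    norm_num
  have hinv := (antitone_seqInverse α).measurable
  have hsum := (measurable_sum_of_adapted hY n).mono (ℱ.le n) le_rfl
  calc ∫⁻ ω, ‖∑ j ∈ Finset.Icc 1 n, Y j ω‖ₑ ^ p ∂P
      ≤ ENNReal.ofReal (2 * (p - 1)) * ∫⁻ x in Ioi (0 : ℝ), ENNReal.ofReal (x ^ (p - 3)) *
          ∫⁻ ω, ENNReal.ofReal (huber x (∑ j ∈ Finset.Icc 1 n, Y j ω)) ∂P :=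
        lintegral_enorm_rpow_le_lintegral_huber hp1 hsum
    _ ≤ ENNReal.ofReal (2 * (p - 1)) * ∫⁻ x in Ioi (0 : ℝ), ENNReal.ofReal (x ^ (p - 3)) *
          (12 * n * ∫⁻ u in Ioc (0 : ℝ) 1,
            Q u * min (ENNReal.ofReal x) (seqInverse α u * Q u)) := by
        gcongr ENNReal.ofReal (2 * (p - 1)) * ?_
        refine setLIntegral_mono' measurableSet_Ioi fun x hx ↦ ?_
        gcongr
        exact lintegral_huber_sum_le hα hY hY_int hY0 hQ hQ_lsc hQ_int hYQ (le_of_lt hx) n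
    _ = ENNReal.ofReal (2 * (p - 1)) * (12 * n *
          ∫⁻ x in Ioi (0 : ℝ), ENNReal.ofReal (x ^ (p - 3)) *
            ∫⁻ u in Ioc (0 : ℝ) 1, Q u * min (ENNReal.ofReal x) (seqInverse α u * Q u)) := by
        rw [← lintegral_const_mul' (12 * (n : ℝ≥0∞)) _ (ENNReal.mul_ne_top (by simp) (by simp))]
        simp only [mul_left_comm (12 * (n : ℝ≥0∞))]
    _ ≤ ENNReal.ofReal (2 * (p - 1)) * (12 * n * (ENNReal.ofReal (1 / ((p - 1) * (2 - p))) *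
          ∫⁻ u in Ioc (0 : ℝ) 1, seqInverse α u ^ (p - 1) * Q u ^ p)) := by
        gcongr
        exact lintegral_rpow_mul_lintegral_mul_min_le hp1 hp2 _ hQ.measurable hinv
    _ = _ := by
        rw [hconst]
        ring

end MomentInequality

section Stationary

variable {Ω : Type*} [MeasurableSpace Ω] {P : Measure Ω} {Y : ℕ → Ω → ℝ}

lemma identDistrib_of_map_shift_eq (hY : ∀ i, Measurable (Y i))
    (hstat : ∀ j, P.map (fun ω i ↦ Y (i + j) ω) = P.map fun ω i ↦ Y i ω) (i j : ℕ) :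
    IdentDistrib (Y i) (Y j) P P := by
  have hzero (k : ℕ) : P.map (Y k) = P.map (Y 0) := by
    have h := congrArg (Measure.map fun f : ℕ → ℝ ↦ f 0) (hstat k)
    rw [Measure.map_map (measurable_pi_apply 0) (by fun_prop),
      Measure.map_map (measurable_pi_apply 0) (by fun_prop)] at h
    simpa only [Function.comp_def, zero_add] using h
  exact ⟨(hY i).aemeasurable, (hY j).aemeasurable, (hzero i).trans (hzero j).symm⟩

variable [IsProbabilityMeasure P]

lemma isMixingRate_of_eq_iSup_alphaMixing (hY : ∀ i, StronglyMeasurable (Y i)) {α : ℕ → ℝ}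
    (hα0 : α 0 = 1 / 2)
    (hα : ∀ m, 1 ≤ m → α m = ⨆ i : ℕ, alphaMixing P
      (⨆ k ∈ Iic i, MeasurableSpace.comap (Y k) inferInstance)
      (⨆ j ∈ Ici (i + m), MeasurableSpace.comap (Y j) inferInstance)) :
    IsMixingRate P (Filtration.natural Y hY) Y α := by
  have hhalf (i m : ℕ) : alphaMixing P
      (⨆ k ∈ Iic i, MeasurableSpace.comap (Y k) inferInstance)
      (⨆ j ∈ Ici (i + m), MeasurableSpace.comap (Y j) inferInstance) ≤ 1 / 2 :=
    alphaMixing_le_half (iSup₂_le fun j _ ↦ (hY j).measurable.comap_le)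
  have hle (i m : ℕ) (hm : 1 ≤ m) : alphaMixing P
      (⨆ k ∈ Iic i, MeasurableSpace.comap (Y k) inferInstance)
      (⨆ j ∈ Ici (i + m), MeasurableSpace.comap (Y j) inferInstance) ≤ α m := by
    rw [hα m hm]
    exact le_ciSup ⟨1 / 2, forall_mem_range.2 fun k ↦ hhalf k m⟩ i
  refine ⟨antitone_nat_of_succ_le fun m ↦ ?_, hα0, fun i m hm ↦ ?_⟩
  · rw [hα (m + 1) m.succ_pos]
    refine ciSup_le fun i ↦ ?_
    rcases Nat.eq_zero_or_pos m with rfl | hm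
    · exact hα0 ▸ hhalf i 1
    · exact (alphaMixing_mono le_rfl (biSup_mono (Ici_subset_Ici.2 (by lia)))).trans (hle i m hm)
  · exact (alphaMixing_mono le_rfl (le_iSup₂ (f := fun j _ ↦ MeasurableSpace.comap (Y j) _) (i + m)
      (mem_Ici.2 le_rfl))).trans (hle i m hm)

end Stationary

lemma eight_mul_sub_three_le_five_rpow {p : ℝ} (hp : 1 ≤ p) : 8 * p - 3 ≤ (5 : ℝ) ^ p := by
  have hexp : (5 : ℝ) ^ p = 5 * Real.exp (Real.log 5 * (p - 1)) := by
    rw [← Real.rpow_def_of_pos (by norm_num), Real.rpow_sub_one (by norm_num)]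
    ring
  nlinarith [Real.add_one_le_exp (Real.log 5 * (p - 1)), Real.log_five_gt_d9]

lemma twenty_four_div_le {p : ℝ} (hp1 : 1 < p) (hp2 : p < 2) :
    24 / (2 - p) ≤ 5 ^ p * (p * (5 - 2 * p) / ((p - 1) * (2 - p))) := by
  have hp1' := sub_pos.2 hp1
  have hp2' := sub_pos.2 hp2
  have hcubic : 24 * (p - 1) ≤ (8 * p - 3) * (p * (5 - 2 * p)) := by
    nlinarith [mul_pos hp1' hp2', mul_pos (mul_pos hp1' hp2') hp1',
      mul_pos (mul_pos hp1' hp2') hp2']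
  have hnum : 24 * (p - 1) ≤ 5 ^ p * (p * (5 - 2 * p)) := by
    refine hcubic.trans (mul_le_mul_of_nonneg_right (eight_mul_sub_three_le_five_rpow hp1.le) ?_)
    nlinarith
  calc 24 / (2 - p) = 24 * (p - 1) / ((p - 1) * (2 - p)) := by field_simp
    _ ≤ 5 ^ p * (p * (5 - 2 * p)) / ((p - 1) * (2 - p)) := by gcongr
    _ = _ := mul_div_assoc _ _ _

lemma lintegral_rpow_mul_rpow_le {E : Type*} [MeasurableSpace E] (μ : Measure E)
    {f g : E → ℝ≥0∞} (hf : Measurable f) (hg : Measurable g) (p : ℝ) {ε : ℝ} (hε : 0 < ε) :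
    ∫⁻ u, f u ^ (p - 1) * g u ^ p ∂μ ≤
      (∫⁻ u, f u ^ ((p - 1) * (1 + ε) / ε) ∂μ) ^ (ε / (1 + ε)) *
        (∫⁻ u, g u ^ ((1 + ε) * p) ∂μ) ^ (1 / (1 + ε)) := by
  have hconj : ((1 + ε) / ε).HolderConjugate (1 + ε) := by
    rw [Real.holderConjugate_iff]
    refine ⟨by rw [lt_div_iff₀ hε]; linarith, ?_⟩
    field_simp
    ring
  have hholder := ENNReal.lintegral_mul_le_Lp_mul_Lq μ hconj
    (hf.pow_const (p - 1)).aemeasurable (hg.pow_const p).aemeasurable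
  simp only [← ENNReal.rpow_mul] at hholder
  rwa [one_div_div, ← mul_div_assoc, mul_comm p] at hholder

theorem corollary2_general {Ω Ω' : Type*} {mΩ : MeasurableSpace Ω} [MeasurableSpace Ω']
    {P : Measure Ω} [IsProbabilityMeasure P] {P' : Measure Ω'} [IsProbabilityMeasure P']
    {ℱ : Filtration ℕ mΩ} {Y : ℕ → Ω → ℝ} {Z : Ω' → ℝ} {α : ℕ → ℝ}
    (hα : IsMixingRate P ℱ Y α) (hY : Adapted ℱ Y) (hY_cent : ∀ j, ∫ ω, Y j ω ∂P = 0)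
    (hZ : Measurable Z) (hZ_int : Integrable Z P')
    (hYZ : ∀ j t, P {ω | t < ‖Y j ω‖ₑ} ≤ P' {ω | t < ‖Z ω‖ₑ})
    {p ε : ℝ} (hp1 : 1 < p) (hp2 : p < 2) (hε : 0 < ε) (N : ℕ) :
    ∫⁻ ω, ‖∑ j ∈ Finset.Icc 1 N, Y j ω‖ₑ ^ p ∂P ≤ ENNReal.ofReal (24 / (2 - p)) * N *
      (∫⁻ u in Ioc (0 : ℝ) 1, seqInverse α u ^ ((p - 1) * (1 + ε) / ε)) ^ (ε / (1 + ε)) *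
      (∫⁻ ω, ‖Z ω‖ₑ ^ ((1 + ε) * p) ∂P') ^ (1 / (1 + ε)) := by
  set Q := tailQuantile P' fun ω ↦ ‖Z ω‖ₑ
  have hQ : Antitone Q := antitone_tailQuantile P' _
  have hmoment : ∫⁻ u in Ioc (0 : ℝ) 1, Q u ^ ((1 + ε) * p) =
      ∫⁻ ω, ‖Z ω‖ₑ ^ ((1 + ε) * p) ∂P' :=
    lintegral_comp_tailQuantile hZ.enorm (φ := fun t ↦ t ^ ((1 + ε) * p)) (by fun_prop)
  have hQ_int : ∫⁻ u in Ioc (0 : ℝ) 1, Q u ≠ ∞ :=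
    (lintegral_comp_tailQuantile hZ.enorm measurable_id).trans_ne hZ_int.hasFiniteIntegral.ne
  have hYQ (j : ℕ) : IsTailEnvelope P (fun ω ↦ ‖Y j ω‖ₑ) Q := fun u ↦
    (hYZ j (Q u)).trans (isTailEnvelope_tailQuantile P' _ u)
  have hY_meas (j : ℕ) : Measurable (Y j) := (hY j).mono (ℱ.le j) le_rfl
  have hY_int (j : ℕ) : Integrable (Y j) P := ⟨(hY_meas j).aestronglyMeasurable,
    ((hYQ j).lintegral_le (hY_meas j).enorm).trans_lt hQ_int.lt_top⟩
  refine (lintegral_enorm_sum_rpow_le hα hY hY_int hY_cent hQ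
    (lowerSemicontinuous_tailQuantile P' _) hQ_int hYQ hp1 hp2 N).trans ?_
  rw [mul_assoc (_ * _), ← hmoment]
  gcongr
  exact lintegral_rpow_mul_rpow_le _ (antitone_seqInverse α).measurable hQ.measurable p hε

/-- **Corollary 2.**
Let `(Y_j)` be a real-valued, centered, stationary process.  For every `p ∈ (1,2)`, every
`ε > 0` and every `N ≥ 1`,
`E|Σ_{j=1}^N Y_j|^p ≤ C_p · N · (∫₀¹ (α_Y⁻¹(u))^{(p-1)(1+ε)/ε} du)^{ε/(1+ε)}
  · (E|Y₁|^{(1+ε)p})^{1/(1+ε)}`,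
where `C_p = 5^p p(5-2p)/((p-1)(2-p))` (the inequality is stated between extended
nonnegative reals). -/
theorem corollary2
    {Ω : Type*} [MeasurableSpace Ω] (P : Measure Ω) [IsProbabilityMeasure P]
    -- the stationary centered process
    (Y : ℕ → Ω → ℝ) (hYmeas : ∀ i, Measurable (Y i))
    (hstat : ∀ j : ℕ, Measure.map (fun ω => fun i : ℕ => Y (i + j) ω) P =
      Measure.map (fun ω => fun i : ℕ => Y i ω) P)
    (hYint : Integrable (Y 1) P) (hcent : ∫ ω, Y 1 ω ∂P = 0)
    -- the Rosenblatt mixing coefficients of Y and their inverse function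
    (alphaY : ℕ → ℝ) (halpha0 : alphaY 0 = 1 / 2)
    (halpha : ∀ m, 1 ≤ m → alphaY m = ⨆ i : ℕ, sSup {r : ℝ | ∃ A B : Set Ω,
      MeasurableSet[⨆ kk ∈ Set.Iic i,
        MeasurableSpace.comap (Y kk) inferInstance] A ∧
      MeasurableSet[⨆ jj ∈ Set.Ici (i + m),
        MeasurableSpace.comap (Y jj) inferInstance] B ∧
      r = |(P A).toReal * (P B).toReal - (P (A ∩ B)).toReal|})
    (αinv : ℝ → ℝ≥0∞)
    (hαinv : ∀ u, αinv u = sInf ((fun m : ℕ => (m : ℝ≥0∞)) '' {m | alphaY m ≤ u}))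
    -- the exponents and the horizon N
    (p ε : ℝ) (hp1 : 1 < p) (hp2 : p < 2) (hε : 0 < ε) (N : ℕ) (hN : 1 ≤ N) :
    ∫⁻ ω, (ENNReal.ofReal |∑ j ∈ Finset.Icc 1 N, Y j ω|) ^ p ∂P ≤
      ENNReal.ofReal (5 ^ p * (p * (5 - 2 * p) / ((p - 1) * (2 - p)))) * (N : ℝ≥0∞) *
        (∫⁻ u in Set.Ioc (0 : ℝ) 1, (αinv u) ^ ((p - 1) * (1 + ε) / ε) ∂volume) ^
          (ε / (1 + ε)) *
        (∫⁻ ω, (ENNReal.ofReal |Y 1 ω|) ^ ((1 + ε) * p) ∂P) ^ (1 / (1 + ε)) := by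
  have hlaw := identDistrib_of_map_shift_eq hYmeas hstat
  have hrate := isMixingRate_of_eq_iSup_alphaMixing (fun i ↦ (hYmeas i).stronglyMeasurable)
    halpha0 halpha
  have htail (j : ℕ) (t : ℝ≥0∞) : P {ω | t < ‖Y j ω‖ₑ} ≤ P {ω | t < ‖Y 1 ω‖ₑ} :=
    ((hlaw j 1).measure_mem_eq (measurableSet_lt measurable_const measurable_enorm)).le
  obtain rfl : αinv = seqInverse alphaY := funext hαinv
  simp only [← Real.enorm_eq_ofReal_abs]
  refine (corollary2_general hrate (Filtration.stronglyAdapted_natural _).adapted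
    (fun j ↦ (hlaw j 1).integral_eq.trans hcent) (hYmeas 1) hYint htail hp1 hp2 hε N).trans ?_
  gcongr
  exact twenty_four_div_le hp1 hp2
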